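/- Let d ≥ 1, ξ ∈ (0,1) and α > 0. Let f : ℝ^d → [0,∞) be continuous, radially symmetric, and such that for some ζ > 0 the map z ↦ f(z) − ζ|z|² is quasi-convex. Then lim_{t→∞} E^{P̂_{α,2^t,f,ξ}}[|x_{2^t}|²] = 0, where for each t the expectation is with respect to the tilted measure on paths over the time interval [0, 2^t]. -/

import Mathlib

/-! The weight `1 / (1 + |t - s| ^ ξ)` is at least `1 / (1 + T ^ ξ)` on `[0, T]²`, and by radial
symmetry and quasi-convexity `z ↦ f z - ζ ‖z‖²` is nonnegative and nondecreasing in `‖z‖`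
(`radial_mono`). Hence the tilting density is a product of two factors: the Gaussian
factor `exp (-α ζ / (1 + T ^ ξ) ∫∫ |x_t - x_s|²)`, and an exponential of minus a sum of functions
of `x_t - x_s` that are even with convex sublevel sets.

Factors of the second kind do not increase variances. After a discretisation of time the path
becomes a finite family of independent standard Gaussians (`IsWienerMeasure.map_incrL`), and the
inequality is obtained from the Prékopa–Leindler inequality. For a linear functional `l`, the
integrals of `exp (s l)` and `exp (-s l)` against the tilted density agree by symmetry, and
Prékopa–Leindler bounds their product by `exp (s² V)` times the squared total mass, where `V` bounds
the variance of `l` under the Gaussian factor. Letting `s → 0` gives `integral_sq_mul_le`.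

It remains to bound the variance of the endpoint under the Gaussian factor. This is the
deterministic inequality `sq_endpoint_le`: with blocks of length `T / p`, the endpoint of a path
is controlled by its quadratic variation over one block and by its total pairwise spread. The
discretisation is removed by Riemann sums and dominated convergence, and the resulting bound is
`d (8 T / p + 4 p (1 + T ^ ξ) / (α ζ T²))` for every `p ≥ 1` (`integral_tiltedPath_le`). The choice
`p ≈ T ^ ((3 - ξ) / 2)` makes it of order `T ^ (-(1 - ξ) / 2)`, which tends to `0` as `ξ < 1`.
-/
open MeasureTheory ProbabilityTheory Real

noncomputable section

/-- Path space `C([0,∞);ℝ^d)` realized as continuous maps `ℝ → ℝ^d`. -/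
abbrev PathSpace (d : ℕ) := C(ℝ, EuclideanSpace ℝ (Fin d))

instance (d : ℕ) : MeasurableSpace (PathSpace d) := borel _
instance (d : ℕ) : BorelSpace (PathSpace d) := ⟨rfl⟩

/-- `P` is the law of standard `d`-dimensional Brownian motion started at `0`
(on the time window `[0,T]`): a centered Gaussian measure on path space with the
Brownian covariance structure `E[x_s^i x_t^j] = δ_{ij} min(s,t)`. -/
def IsWienerMeasure {d : ℕ} (T : ℝ) (P : Measure (PathSpace d)) : Prop :=
  IsProbabilityMeasure P ∧
  (∀ L : PathSpace d →L[ℝ] ℝ, ∃ v : NNReal, P.map L = gaussianReal 0 v) ∧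
  (∀ s t : ℝ, s ∈ Set.Icc 0 T → t ∈ Set.Icc 0 T → ∀ i j : Fin d,
    ∫ ω, (ω s) i * (ω t) j ∂P = if i = j then min s t else 0)

/-- The interaction energy `∫_0^T ∫_0^T f(x_t - x_s)/(1+|t-s|^ξ) ds dt`. -/
def pairEnergy {d : ℕ} (f : EuclideanSpace ℝ (Fin d) → ℝ) (ξ T : ℝ) (ω : PathSpace d) : ℝ :=
  ∫ t in Set.Icc (0:ℝ) T, ∫ s in Set.Icc (0:ℝ) T, f (ω t - ω s) / (1 + |t - s| ^ ξ)

/-- The tilted path measure `P̂_{α,T,f,ξ}`, with density proportional to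
`exp(-α ∫∫ f(x_t-x_s)/(1+|t-s|^ξ))` with respect to `P`. -/
def tiltedPath {d : ℕ} (P : Measure (PathSpace d)) (f : EuclideanSpace ℝ (Fin d) → ℝ)
    (α ξ T : ℝ) : Measure (PathSpace d) :=
  P.tilted (fun ω => -α * pairEnergy f ξ T ω)

/-! ### The Prékopa–Leindler inequality on the line -/

/-- The one-dimensional Brunn-Minkowski inequality for compact sets, for midpoints. -/
lemma volume_add_le_of_isCompact {K L C : Set ℝ} (hK : IsCompact K) (hL : IsCompact L)
    (hKn : K.Nonempty) (hLn : L.Nonempty)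
    (h : ∀ a ∈ K, ∀ b ∈ L, (1 / 2 : ℝ) * (a + b) ∈ C) :
    volume K + volume L ≤ 2 * volume C := by
  have ha := hK.sSup_mem hKn
  have hb := hL.sInf_mem hLn
  set a := sSup K
  set b := sInf L
  have hhalf : ∀ (S : Set ℝ) (e : ℝ),
      volume S = 2 * volume ((fun c : ℝ => 2 * c) ⁻¹' ((fun z : ℝ => z - e) ⁻¹' S)) := by
    intro S e
    simp_rw [sub_eq_add_neg]
    rw [Real.volume_preimage_mul_left (by norm_num : (2 : ℝ) ≠ 0), measure_preimage_add_right,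
      ← mul_assoc]
    have : (2 : ENNReal) = ENNReal.ofReal 2 := by simp
    rw [this, ← ENNReal.ofReal_mul (by norm_num)]
    norm_num
  rw [hhalf K b, hhalf L a, ← mul_add]
  gcongr
  set K' := (fun c : ℝ => 2 * c) ⁻¹' ((fun z : ℝ => z - b) ⁻¹' K)
  set L' := (fun c : ℝ => 2 * c) ⁻¹' ((fun z : ℝ => z - a) ⁻¹' L)
  have hL' : MeasurableSet L' := by
    have : Measurable fun c : ℝ => 2 * c - a := by fun_prop
    exact this hL.measurableSet
  have hinter : volume (K' ∩ L') = 0 := by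
    refine measure_mono_null (t := {(1 / 2 : ℝ) * (a + b)}) ?_ (by simp)
    rintro c ⟨h1, h2⟩
    have h1' : 2 * c - b ≤ a := le_csSup hK.bddAbove h1
    have h2' : b ≤ 2 * c - a := csInf_le hL.bddBelow h2
    simp only [Set.mem_singleton_iff]
    linarith
  rw [← measure_union_add_inter K' hL', hinter, add_zero]
  apply measure_mono
  rintro c (hc | hc)
  · have := h _ hc b hb
    simpa using this
  · have := h a ha _ hc
    simpa using this

/-- The one-dimensional Brunn-Minkowski inequality, for midpoints. -/
lemma volume_add_le_of_midpoint {A B C : Set ℝ} (hA : MeasurableSet A) (hB : MeasurableSet B)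
    (hAn : A.Nonempty) (hBn : B.Nonempty)
    (h : ∀ a ∈ A, ∀ b ∈ B, (1 / 2 : ℝ) * (a + b) ∈ C) :
    volume A + volume B ≤ 2 * volume C := by
  obtain ⟨a, ha⟩ := hAn
  obtain ⟨b, hb⟩ := hBn
  have key : ∀ K, K ⊆ A → IsCompact K → ∀ L, L ⊆ B → IsCompact L →
      volume K + volume L ≤ 2 * volume C := by
    intro K hKA hK L hLB hL
    calc volume K + volume L ≤ volume (insert a K) + volume (insert b L) := by
          gcongr <;> exact Set.subset_insert _ _
      _ ≤ 2 * volume C := by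
          apply volume_add_le_of_isCompact (hK.insert a) (hL.insert b) (Set.insert_nonempty _ _)
            (Set.insert_nonempty _ _)
          intro x hx y hy
          exact h x (Set.insert_subset ha hKA hx) y (Set.insert_subset hb hLB hy)
  have key2 : ∀ K, K ⊆ A → IsCompact K → volume K + volume B ≤ 2 * volume C := by
    intro K hKA hK
    have hle : volume K ≤ 2 * volume C :=
      le_trans (by simp) (key K hKA hK ∅ (Set.empty_subset _) isCompact_empty)
    rw [add_comm]
    refine add_le_of_le_tsub_right_of_le hle ?_
    rw [hB.measure_eq_iSup_isCompact]
    refine iSup₂_le fun L hLB => iSup_le fun hL => ?_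
    exact ENNReal.le_sub_of_add_le_left hK.measure_lt_top.ne (key K hKA hK L hLB hL)
  have hle : volume B ≤ 2 * volume C :=
    le_trans (by simp) (key2 ∅ (Set.empty_subset _) isCompact_empty)
  by_cases hBt : volume B = ⊤
  · rw [hBt, top_le_iff] at hle
    rw [hle]
    exact le_top
  refine add_le_of_le_tsub_right_of_le hle ?_
  rw [hA.measure_eq_iSup_isCompact]
  refine iSup₂_le fun K hKA => iSup_le fun hK => ?_
  exact ENNReal.le_sub_of_add_le_right hBt (key2 K hKA hK)

/-- The additive form of the Prékopa-Leindler inequality on the line: when both functions have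
supremum `1`, their superlevel sets at every height in `(0, 1)` are nonempty, so that the
Brunn-Minkowski inequality applies height by height. -/
lemma lintegral_add_le_of_sup_one {F G H : ℝ → ℝ} (hF : Measurable F) (hG : Measurable G)
    (hH : Measurable H) (hF0 : ∀ x, 0 ≤ F x) (hG0 : ∀ x, 0 ≤ G x) (hH0 : ∀ x, 0 ≤ H x)
    (hF1 : ∀ x, F x ≤ 1) (hG1 : ∀ x, G x ≤ 1)
    (hFs : ∀ t < 1, ∃ x, t < F x) (hGs : ∀ t < 1, ∃ x, t < G x)
    (h : ∀ x y, F x * G y ≤ H ((1 / 2) * (x + y)) ^ 2) :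
    (∫⁻ x, ENNReal.ofReal (F x)) + ∫⁻ x, ENNReal.ofReal (G x) ≤
      2 * ∫⁻ x, ENNReal.ofReal (H x) := by
  rw [lintegral_eq_lintegral_meas_lt volume (.of_forall hF0) hF.aemeasurable,
    lintegral_eq_lintegral_meas_lt volume (.of_forall hG0) hG.aemeasurable,
    lintegral_eq_lintegral_meas_lt volume (.of_forall hH0) hH.aemeasurable,
    ← lintegral_const_mul' _ _ (by simp), ← lintegral_add_left']
  · refine setLIntegral_mono' measurableSet_Ioi fun t ht => ?_
    have ht0 : 0 < t := ht
    rcases lt_or_ge t 1 with ht1 | ht1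
    · apply volume_add_le_of_midpoint (measurableSet_lt measurable_const hF)
        (measurableSet_lt measurable_const hG) (hFs t ht1) (hGs t ht1)
      intro a ha b hb
      have ha' : t < F a := ha
      have hb' : t < G b := hb
      have := h a b
      show t < H _
      by_contra hcon
      push Not at hcon
      nlinarith [hH0 ((1 / 2) * (a + b)), mul_lt_mul'' ha' hb' ht0.le ht0.le]
    · have e1 : {a | t < F a} = ∅ := by
        ext a; simp only [Set.mem_ofPred_eq, Set.mem_empty_iff_false, iff_false, not_lt]
        exact (hF1 a).trans ht1
      have e2 : {a | t < G a} = ∅ := by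
        ext a; simp only [Set.mem_ofPred_eq, Set.mem_empty_iff_false, iff_false, not_lt]
        exact (hG1 a).trans ht1
      simp [e1, e2]
  · have : Antitone fun t : ℝ => volume {a | t < F a} :=
      fun s t hst => measure_mono fun a (ha : t < F a) => lt_of_le_of_lt hst ha
    exact this.measurable.aemeasurable

lemma ENNReal.mul_le_sq_of_add_le {x y z : ENNReal} (h : x + y ≤ 2 * z) : x * y ≤ z ^ 2 := by
  by_cases hz : z = ⊤
  · simp [hz]
  have hxy : x + y ≠ ⊤ := ne_top_of_le_ne_top (ENNReal.mul_ne_top (by simp) hz) h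
  rw [ENNReal.add_ne_top] at hxy
  lift x to NNReal using hxy.1
  lift y to NNReal using hxy.2
  lift z to NNReal using hz
  norm_cast at *
  rw [← NNReal.coe_le_coe] at *
  push_cast at *
  nlinarith [sq_nonneg ((x : ℝ) - y), x.2, y.2, z.2]

/-- The Prékopa-Leindler inequality on the line, for bounded functions. -/
lemma prekopa_leindler_real_bdd {f g h : ℝ → ENNReal} (hf : Measurable f) (hg : Measurable g)
    (hh : Measurable h) (M : NNReal) (hfM : ∀ x, f x ≤ M) (hgM : ∀ x, g x ≤ M)
    (H : ∀ x y, f x * g y ≤ h ((1 / 2) * (x + y)) ^ 2) :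
    (∫⁻ x, f x) * ∫⁻ x, g x ≤ (∫⁻ x, h x) ^ 2 := by
  have hfa := fun x => le_iSup f x
  have hgb := fun x => le_iSup g x
  have hat : (⨆ x, f x) ≠ ⊤ := ne_top_of_le_ne_top ENNReal.coe_ne_top (iSup_le hfM)
  have hbt : (⨆ x, g x) ≠ ⊤ := ne_top_of_le_ne_top ENNReal.coe_ne_top (iSup_le hgM)
  have hfs : ∀ s < ⨆ x, f x, ∃ x, s < f x := fun s hs => lt_iSup_iff.mp hs
  have hgs : ∀ s < ⨆ x, g x, ∃ x, s < g x := fun s hs => lt_iSup_iff.mp hs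
  generalize (⨆ x, f x) = a at *
  generalize (⨆ x, g x) = b at *
  rcases eq_or_ne a 0 with rfl | ha0
  · have : ∀ x, f x = 0 := fun x => le_antisymm (hfa x) bot_le
    simp [this]
  rcases eq_or_ne b 0 with rfl | hb0
  · have : ∀ x, g x = 0 := fun x => le_antisymm (hgb x) bot_le
    simp [this]
  lift a to NNReal using hat
  lift b to NNReal using hbt
  have ha : 0 < a := by exact_mod_cast pos_iff_ne_zero.mpr ha0
  have hb : 0 < b := by exact_mod_cast pos_iff_ne_zero.mpr hb0
  set c : NNReal := NNReal.sqrt (a * b) with hc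
  have hcc : c * c = a * b := NNReal.mul_self_sqrt _
  have hc0 : 0 < c := NNReal.sqrt_pos.mpr (mul_pos ha hb)
  have hft : ∀ x, f x ≠ ⊤ := fun x => ne_top_of_le_ne_top ENNReal.coe_ne_top (hfa x)
  have hgt : ∀ x, g x ≠ ⊤ := fun x => ne_top_of_le_ne_top ENNReal.coe_ne_top (hgb x)
  let F : ℝ → ℝ := fun x => (f x).toReal / a
  let G : ℝ → ℝ := fun x => (g x).toReal / b
  -- The third function is capped at `1`, which keeps it finite and preserves the hypothesis.
  let K : ℝ → ℝ := fun x => (min (h x) c).toReal / c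
  have hcapt : ∀ x, min (h x) c ≠ ⊤ := fun x =>
    ne_top_of_le_ne_top ENNReal.coe_ne_top (min_le_right _ _)
  have haR : (0 : ℝ) < a := by exact_mod_cast ha
  have hbR : (0 : ℝ) < b := by exact_mod_cast hb
  have hcR : (0 : ℝ) < c := by exact_mod_cast hc0
  have hccR : (c : ℝ) * c = a * b := by exact_mod_cast hcc
  have eF : ∀ x, f x = a * ENNReal.ofReal (F x) := by
    intro x
    rw [← ENNReal.ofReal_coe_nnreal, ← ENNReal.ofReal_mul haR.le]
    simp only [F]
    rw [mul_div_cancel₀ _ haR.ne', ENNReal.ofReal_toReal (hft x)]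
  have eG : ∀ x, g x = b * ENNReal.ofReal (G x) := by
    intro x
    rw [← ENNReal.ofReal_coe_nnreal, ← ENNReal.ofReal_mul hbR.le]
    simp only [G]
    rw [mul_div_cancel₀ _ hbR.ne', ENNReal.ofReal_toReal (hgt x)]
  have eK : ∀ x, c * ENNReal.ofReal (K x) ≤ h x := by
    intro x
    rw [← ENNReal.ofReal_coe_nnreal, ← ENNReal.ofReal_mul hcR.le]
    simp only [K]
    rw [mul_div_cancel₀ _ hcR.ne', ENNReal.ofReal_toReal (hcapt x)]
    exact min_le_left _ _
  have hmain : (∫⁻ x, ENNReal.ofReal (F x)) + ∫⁻ x, ENNReal.ofReal (G x) ≤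
      2 * ∫⁻ x, ENNReal.ofReal (K x) := by
    have hfle : ∀ x, (f x).toReal ≤ a := fun x => by
      have := ENNReal.toReal_mono ENNReal.coe_ne_top (hfa x)
      simpa using this
    have hgle : ∀ x, (g x).toReal ≤ b := fun x => by
      have := ENNReal.toReal_mono ENNReal.coe_ne_top (hgb x)
      simpa using this
    apply lintegral_add_le_of_sup_one
    · exact hf.ennreal_toReal.div_const _
    · exact hg.ennreal_toReal.div_const _
    · exact (hh.min measurable_const).ennreal_toReal.div_const _
    · intro x; positivity
    · intro x; positivity
    · intro x; positivity
    · intro x; exact (div_le_one haR).mpr (hfle x)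
    · intro x; exact (div_le_one hbR).mpr (hgle x)
    · intro t ht
      have : ENNReal.ofReal (t * a) < a := by
        rw [← ENNReal.ofReal_coe_nnreal, ENNReal.ofReal_lt_ofReal_iff haR]
        nlinarith
      obtain ⟨x, hx⟩ := hfs _ this
      refine ⟨x, (lt_div_iff₀ haR).mpr ?_⟩
      by_contra hcon
      push Not at hcon
      have := ENNReal.ofReal_le_ofReal hcon
      rw [ENNReal.ofReal_toReal (hft x)] at this
      exact absurd hx this.not_gt
    · intro t ht
      have : ENNReal.ofReal (t * b) < b := by
        rw [← ENNReal.ofReal_coe_nnreal, ENNReal.ofReal_lt_ofReal_iff hbR]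
        nlinarith
      obtain ⟨x, hx⟩ := hgs _ this
      refine ⟨x, (lt_div_iff₀ hbR).mpr ?_⟩
      by_contra hcon
      push Not at hcon
      have := ENNReal.ofReal_le_ofReal hcon
      rw [ENNReal.ofReal_toReal (hgt x)] at this
      exact absurd hx this.not_gt
    · intro x y
      have h1 : f x * g y ≤ (min (h ((1 / 2) * (x + y))) c) ^ 2 := by
        rcases le_total (h ((1 / 2) * (x + y))) c with hle | hle
        · rw [min_eq_left hle]; exact H x y
        · rw [min_eq_right hle, sq]
          calc f x * g y ≤ a * b := mul_le_mul' (hfa x) (hgb y)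
            _ = c * c := by exact_mod_cast hcc.symm
      have h2 := ENNReal.toReal_mono (ENNReal.pow_ne_top (hcapt _)) h1
      rw [ENNReal.toReal_mul, ENNReal.toReal_pow] at h2
      simp only [F, G, K]
      rw [div_mul_div_comm, div_pow, sq (c : ℝ), hccR]
      gcongr
  calc (∫⁻ x, f x) * ∫⁻ x, g x
      = (a * b) * ((∫⁻ x, ENNReal.ofReal (F x)) * ∫⁻ x, ENNReal.ofReal (G x)) := by
        simp_rw [eF, eG]
        rw [lintegral_const_mul' _ _ ENNReal.coe_ne_top,
          lintegral_const_mul' _ _ ENNReal.coe_ne_top]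
        ring
    _ ≤ (c * c) * (∫⁻ x, ENNReal.ofReal (K x)) ^ 2 := by
        exact mul_le_mul' (by exact_mod_cast hcc.ge) (ENNReal.mul_le_sq_of_add_le hmain)
    _ = (∫⁻ x, c * ENNReal.ofReal (K x)) ^ 2 := by
        rw [lintegral_const_mul' _ _ ENNReal.coe_ne_top]; ring
    _ ≤ (∫⁻ x, h x) ^ 2 := by
        gcongr with x
        exact eK x

lemma lintegral_eq_iSup_min_nat {f : ℝ → ENNReal} (hf : Measurable f) :
    ∫⁻ x, f x = ⨆ n : ℕ, ∫⁻ x, min (f x) n := by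
  rw [← lintegral_iSup]
  · congr 1 with x
    have : (⨆ n : ℕ, (min (f x) n)) = f x ⊓ ⨆ n : ℕ, (n : ENNReal) := by
      rw [inf_iSup_eq]
    rw [this, ENNReal.iSup_natCast]
    simp
  · intro n; exact hf.min measurable_const
  · intro m n hmn x
    exact min_le_min le_rfl (by exact_mod_cast hmn)

/-- The Prékopa-Leindler inequality on the line, for midpoints. -/
lemma prekopa_leindler_real {f g h : ℝ → ENNReal} (hf : Measurable f) (hg : Measurable g)
    (hh : Measurable h) (H : ∀ x y, f x * g y ≤ h ((1 / 2) * (x + y)) ^ 2) :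
    (∫⁻ x, f x) * ∫⁻ x, g x ≤ (∫⁻ x, h x) ^ 2 := by
  rw [lintegral_eq_iSup_min_nat hf, lintegral_eq_iSup_min_nat hg, ENNReal.iSup_mul]
  refine iSup_le fun n => ?_
  rw [ENNReal.mul_iSup]
  refine iSup_le fun m => ?_
  apply prekopa_leindler_real_bdd (hf.min measurable_const) (hg.min measurable_const) hh
    (max n m : ℕ)
  · intro x; exact (min_le_right _ _).trans (by exact_mod_cast le_max_left _ _)
  · intro x; exact (min_le_right _ _).trans (by exact_mod_cast le_max_right _ _)
  · intro x y
    exact (mul_le_mul' (min_le_left _ _) (min_le_left _ _)).trans (H x y)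

/-! ### Gaussian domination under symmetric quasi-concave factors -/

/-- The standard Gaussian measure on `ℝ^ι`, as a product measure. -/
def stdGauss (ι : Type*) [Fintype ι] : Measure (ι → ℝ) :=
  Measure.pi fun _ => gaussianReal 0 1

instance (ι : Type*) [Fintype ι] : IsProbabilityMeasure (stdGauss ι) := by
  unfold stdGauss; infer_instance

/-- The Prékopa-Leindler inequality for the standard Gaussian measure on the line. The Gaussian
density `φ` satisfies `φ x * φ y = φ ((x + y) / 2) ^ 2 * exp (-(x - y) ^ 2 / 4)`, which
accounts for the weight in the hypothesis. -/
lemma prekopa_leindler_gaussianReal {f g h : ℝ → ENNReal} (hf : Measurable f) (hg : Measurable g)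
    (hh : Measurable h)
    (H : ∀ x y, f x * g y * ENNReal.ofReal (exp (-((x - y) ^ 2 / 4))) ≤
      h ((1 / 2) * (x + y)) ^ 2) :
    (∫⁻ x, f x ∂(gaussianReal 0 1)) * ∫⁻ x, g x ∂(gaussianReal 0 1) ≤
      (∫⁻ x, h x ∂(gaussianReal 0 1)) ^ 2 := by
  have hφ : Measurable (gaussianPDF 0 1) := measurable_gaussianPDF 0 1
  rw [gaussianReal_of_var_ne_zero _ one_ne_zero, lintegral_withDensity_eq_lintegral_mul _ hφ hf,
    lintegral_withDensity_eq_lintegral_mul _ hφ hg,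
    lintegral_withDensity_eq_lintegral_mul _ hφ hh]
  apply prekopa_leindler_real (hφ.mul hf) (hφ.mul hg) (hφ.mul hh)
  intro x y
  have hpdf : gaussianPDF 0 1 x * gaussianPDF 0 1 y =
      gaussianPDF 0 1 ((1 / 2) * (x + y)) ^ 2 * ENNReal.ofReal (exp (-((x - y) ^ 2 / 4))) := by
    simp only [gaussianPDF_def]
    rw [← ENNReal.ofReal_mul (gaussianPDFReal_nonneg _ _ _), sq,
      ← ENNReal.ofReal_mul (gaussianPDFReal_nonneg _ _ _),
      ← ENNReal.ofReal_mul (mul_nonneg (gaussianPDFReal_nonneg _ _ _)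
        (gaussianPDFReal_nonneg _ _ _))]
    congr 1
    simp only [gaussianPDFReal_def]
    have he : exp (-(x - 0) ^ 2 / (2 * ((1 : NNReal) : ℝ))) *
        exp (-(y - 0) ^ 2 / (2 * ((1 : NNReal) : ℝ))) =
        exp (-(1 / 2 * (x + y) - 0) ^ 2 / (2 * ((1 : NNReal) : ℝ))) *
        exp (-(1 / 2 * (x + y) - 0) ^ 2 / (2 * ((1 : NNReal) : ℝ))) *
        exp (-((x - y) ^ 2 / 4)) := by
      rw [← exp_add, ← exp_add, ← exp_add]
      congr 1
      push_cast
      ring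
    linear_combination (√(2 * π * ((1 : NNReal) : ℝ)))⁻¹ ^ 2 * he
  calc (gaussianPDF 0 1 * f) x * (gaussianPDF 0 1 * g) y
      = gaussianPDF 0 1 x * gaussianPDF 0 1 y * (f x * g y) := by
        simp only [Pi.mul_apply]; ring
    _ = gaussianPDF 0 1 ((1 / 2) * (x + y)) ^ 2 *
        (f x * g y * ENNReal.ofReal (exp (-((x - y) ^ 2 / 4)))) := by rw [hpdf]; ring
    _ ≤ gaussianPDF 0 1 ((1 / 2) * (x + y)) ^ 2 * h ((1 / 2) * (x + y)) ^ 2 := by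
        gcongr; exact H x y
    _ = _ := by simp only [Pi.mul_apply]; ring

lemma lintegral_stdGauss_succ {n : ℕ} {f : (Fin (n + 1) → ℝ) → ENNReal} (hf : Measurable f) :
    ∫⁻ x, f x ∂(stdGauss (Fin (n + 1))) =
      ∫⁻ a, ∫⁻ x, f (Fin.cons a x) ∂(stdGauss (Fin n)) ∂(gaussianReal 0 1) := by
  have hmp := (measurePreserving_piFinSuccAbove
    (fun _ : Fin (n + 1) => gaussianReal 0 1) 0).symm
  have := hmp.lintegral_comp hf
  unfold stdGauss
  rw [← this]
  refine (lintegral_prod _ (hf.comp (MeasurableEquiv.measurable _)).aemeasurable).trans ?_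
  simp [MeasurableEquiv.piFinSuccAbove_symm_apply, Fin.insertNthEquiv]

lemma measurable_cons {n : ℕ} :
    Measurable fun p : ℝ × (Fin n → ℝ) => (Fin.cons p.1 p.2 : Fin (n + 1) → ℝ) := by
  rw [measurable_pi_iff]
  intro i
  refine Fin.cases ?_ (fun j => ?_) i
  · simpa using measurable_fst
  · simp only [Fin.cons_succ]; fun_prop

lemma prekopa_leindler_stdGauss_fin (n : ℕ) {f g h : (Fin n → ℝ) → ENNReal} (hf : Measurable f)
    (hg : Measurable g) (hh : Measurable h)
    (H : ∀ x y, f x * g y * ENNReal.ofReal (exp (-(∑ i, (x i - y i) ^ 2 / 4))) ≤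
      h ((1 / 2 : ℝ) • (x + y)) ^ 2) :
    (∫⁻ x, f x ∂(stdGauss (Fin n))) * ∫⁻ x, g x ∂(stdGauss (Fin n)) ≤
      (∫⁻ x, h x ∂(stdGauss (Fin n))) ^ 2 := by
  induction n with
  | zero =>
    have hc : ∀ u : (Fin 0 → ℝ) → ENNReal, ∫⁻ x, u x ∂(stdGauss (Fin 0)) = u 0 := by
      intro u
      have : u = fun _ => u 0 := by ext x; rw [Subsingleton.elim x 0]
      rw [this]; simp
    rw [hc, hc, hc]
    have := H 0 0
    simpa using this
  | succ n ih =>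
    have hmeas : ∀ {u : (Fin (n + 1) → ℝ) → ENNReal}, Measurable u →
        Measurable fun a : ℝ => ∫⁻ x, u (Fin.cons a x) ∂(stdGauss (Fin n)) := by
      intro u hu
      exact (hu.comp measurable_cons).lintegral_prod_right'
    have hsec : ∀ {u : (Fin (n + 1) → ℝ) → ENNReal}, Measurable u → ∀ a : ℝ,
        Measurable fun x : Fin n → ℝ => u (Fin.cons a x) := by
      intro u hu a
      exact hu.comp (measurable_cons.comp measurable_prodMk_left)
    rw [lintegral_stdGauss_succ hf, lintegral_stdGauss_succ hg, lintegral_stdGauss_succ hh]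
    apply prekopa_leindler_gaussianReal (hmeas hf) (hmeas hg) (hmeas hh)
    intro a b
    rw [mul_right_comm, ← lintegral_mul_const _ (hsec hf a)]
    apply ih ((hsec hf a).mul_const _) (hsec hg b) (hsec hh _)
    intro x y
    have h1 := H (Fin.cons a x) (Fin.cons b y)
    have h2 : (1 / 2 : ℝ) • ((Fin.cons a x : Fin (n + 1) → ℝ) + Fin.cons b y) =
        Fin.cons ((1 / 2) * (a + b)) ((1 / 2 : ℝ) • (x + y)) := by
      ext i
      refine Fin.cases ?_ (fun j => ?_) i <;> simp [mul_add]
    rw [h2] at h1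
    refine le_trans (le_of_eq ?_) h1
    rw [Fin.sum_univ_succ]
    simp only [Fin.cons_zero, Fin.cons_succ]
    rw [neg_add, exp_add, ENNReal.ofReal_mul (exp_pos _).le]
    ring

/-- The Prékopa-Leindler inequality for the standard Gaussian measure. -/
lemma prekopa_leindler_stdGauss {ι : Type*} [Fintype ι] {f g h : (ι → ℝ) → ENNReal}
    (hf : Measurable f) (hg : Measurable g) (hh : Measurable h)
    (H : ∀ x y, f x * g y * ENNReal.ofReal (exp (-(∑ i, (x i - y i) ^ 2 / 4))) ≤
      h ((1 / 2 : ℝ) • (x + y)) ^ 2) :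
    (∫⁻ x, f x ∂(stdGauss ι)) * ∫⁻ x, g x ∂(stdGauss ι) ≤
      (∫⁻ x, h x ∂(stdGauss ι)) ^ 2 := by
  let e := (Fintype.equivFin ι).symm
  let E := MeasurableEquiv.piCongrLeft (fun _ : ι => ℝ) e
  have hmp : MeasurePreserving E (stdGauss (Fin (Fintype.card ι))) (stdGauss ι) :=
    measurePreserving_piCongrLeft (fun _ : ι => gaussianReal 0 1) e
  have hE : ∀ x j, E x (e j) = x j := fun x j => Equiv.piCongrLeft_apply_apply (fun _ : ι => ℝ) e x j
  have hE' : ∀ x i, E x i = x (e.symm i) := by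
    intro x i
    rw [← hE x (e.symm i), Equiv.apply_symm_apply]
  rw [← hmp.lintegral_comp hf, ← hmp.lintegral_comp hg, ← hmp.lintegral_comp hh]
  apply prekopa_leindler_stdGauss_fin _ (hf.comp E.measurable) (hg.comp E.measurable)
    (hh.comp E.measurable)
  intro x y
  have h1 := H (E x) (E y)
  have h2 : (1 / 2 : ℝ) • (E x + E y) = E ((1 / 2 : ℝ) • (x + y)) := by
    ext i
    simp [hE', mul_add]
  have h3 : ∑ i, (E x i - E y i) ^ 2 / 4 = ∑ j, (x j - y j) ^ 2 / 4 := by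
    rw [← e.sum_comp]
    simp [hE]
  rwa [h2, h3] at h1

lemma measurePreserving_neg_stdGauss (ι : Type*) [Fintype ι] :
    MeasurePreserving (fun x : ι → ℝ => -x) (stdGauss ι) (stdGauss ι) := by
  have : MeasurePreserving (fun x : ℝ => -x) (gaussianReal 0 1) (gaussianReal 0 1) :=
    ⟨measurable_neg, by rw [gaussianReal_map_neg, neg_zero]⟩
  exact measurePreserving_pi _ _ fun _ => this

section Correlation

variable {ι : Type*} [Fintype ι]

/-- An exponential tilt by a linear functional `l` of the Gaussian weight
`exp (-|x|² / 2 - b x)`, restricted to a symmetric convex set `A`, raises the mass by a factor of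
at most `exp (s² V / 2)`, where `V` bounds the variance of `l` under that Gaussian weight: symmetry
makes the integrals for `l` and `-l` equal, and the Prékopa-Leindler inequality bounds their
product. -/
lemma setLIntegral_exp_le {A : Set (ι → ℝ)} (hA : MeasurableSet A)
    (hAneg : ∀ x ∈ A, -x ∈ A) (hAmid : ∀ x ∈ A, ∀ y ∈ A, (1 / 2 : ℝ) • (x + y) ∈ A)
    {l : (ι → ℝ) →L[ℝ] ℝ} {b : (ι → ℝ) → ℝ} (hb : Measurable b) (hb0 : ∀ x, 0 ≤ b x)
    (hbneg : ∀ x, b (-x) = b x)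
    (hbpar : ∀ x y, b x + b y = 2 * b ((1 / 2 : ℝ) • (x + y)) + 2 * b ((1 / 2 : ℝ) • (x - y)))
    {V : ℝ} (hV0 : 0 ≤ V) (hV : ∀ u, l u ^ 2 ≤ V * (∑ i, u i ^ 2 + 2 * b u)) (s : ℝ) :
    ∫⁻ x in A, ENNReal.ofReal (exp (s * l x - b x)) ∂(stdGauss ι) ≤
      ENNReal.ofReal (exp (s ^ 2 * V / 2)) *
        ∫⁻ x in A, ENNReal.ofReal (exp (- b x)) ∂(stdGauss ι) := by
  have hl : Measurable l := l.continuous.measurable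
  let f : ℝ → (ι → ℝ) → ENNReal :=
    fun s => A.indicator fun x => ENNReal.ofReal (exp (s * l x - b x))
  have hf : ∀ s, Measurable (f s) := fun s =>
    (Measurable.indicator (by fun_prop) hA)
  let h : (ι → ℝ) → ENNReal := fun x => ENNReal.ofReal (exp (s ^ 2 * V / 2)) *
    A.indicator (fun x => ENNReal.ofReal (exp (-b x))) x
  have hh : Measurable h := (Measurable.indicator (by fun_prop) hA).const_mul _
  have hsymm : ∫⁻ x, f (-s) x ∂(stdGauss ι) = ∫⁻ x, f s x ∂(stdGauss ι) := by
    rw [← (measurePreserving_neg_stdGauss ι).lintegral_comp (hf (-s))]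
    congr 1 with x
    have hiff : -x ∈ A ↔ x ∈ A := ⟨fun hx => by simpa using hAneg _ hx, hAneg x⟩
    simp only [f]
    by_cases hx : x ∈ A
    · rw [Set.indicator_of_mem hx, Set.indicator_of_mem (hiff.mpr hx), hbneg, map_neg]
      simp
    · rw [Set.indicator_of_notMem hx, Set.indicator_of_notMem (fun h => hx (hiff.mp h))]
  have hPL : (∫⁻ x, f s x ∂(stdGauss ι)) * ∫⁻ x, f (-s) x ∂(stdGauss ι) ≤
      (∫⁻ x, h x ∂(stdGauss ι)) ^ 2 := by
    apply prekopa_leindler_stdGauss (hf s) (hf (-s)) hh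
    intro x y
    simp only [f, h]
    by_cases hx : x ∈ A
    swap; · simp [hx]
    by_cases hy : y ∈ A
    swap; · simp [hy]
    rw [Set.indicator_of_mem hx, Set.indicator_of_mem hy, Set.indicator_of_mem (hAmid x hx y hy),
      ← ENNReal.ofReal_mul (exp_pos _).le, ← ENNReal.ofReal_mul (exp_pos _).le,
      ← ENNReal.ofReal_mul (mul_pos (exp_pos _) (exp_pos _)).le, ← ENNReal.ofReal_pow (by positivity)]
    apply ENNReal.ofReal_le_ofReal
    rw [← exp_add, ← exp_add, ← exp_add, ← exp_nat_mul]
    apply exp_le_exp.mpr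
    set u := (1 / 2 : ℝ) • (x - y) with hu
    have hlu : l x - l y = 2 * l u := by
      rw [hu, map_smul, map_sub, smul_eq_mul]; ring
    have hsu : ∑ i, (x i - y i) ^ 2 / 4 = ∑ i, u i ^ 2 := by
      refine Finset.sum_congr rfl fun i _ => ?_
      simp [hu]; ring
    have hq : 0 ≤ ∑ i, u i ^ 2 + 2 * b u := by
      have := hb0 u
      positivity
    -- AM-GM: `2 s l(u) ≤ s² V + q(u)` because `l(u)² ≤ V q(u)`; the parallelogram law turns
    -- `q(u)` into the slack in the Gaussian weight.
    have hineq : 2 * (s * l u) ≤ s ^ 2 * V + (∑ i, u i ^ 2 + 2 * b u) := by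
      have hsV : 0 ≤ s ^ 2 * V := by positivity
      refine le_of_sq_le_sq ?_ (by positivity)
      have := mul_le_mul_of_nonneg_left (hV u) (sq_nonneg s)
      nlinarith [sq_nonneg (s ^ 2 * V - (∑ i, u i ^ 2 + 2 * b u))]
    have hbu := hbpar x y
    rw [← hu] at hbu
    have hslu : s * l x - s * l y = 2 * (s * l u) := by rw [← mul_sub, hlu]; ring
    rw [hsu]
    push_cast
    linarith
  rw [hsymm, ← sq] at hPL
  have hres : ∫⁻ x, f s x ∂(stdGauss ι) ≤ ∫⁻ x, h x ∂(stdGauss ι) :=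
    (ENNReal.pow_le_pow_left_iff (by norm_num : (2 : ℕ) ≠ 0)).mp hPL
  rw [lintegral_const_mul' _ _ (by simp)] at hres
  simpa only [f, lintegral_indicator hA] using hres

/-- Layer-cake representation of the integral of a product. -/
lemma lintegral_ofReal_mul_eq {Ω : Type*} [MeasurableSpace Ω] (μ : Measure Ω) {F : Ω → ℝ}
    (hF : Measurable F) (hF0 : ∀ x, 0 ≤ F x) {W : Ω → ENNReal} (hW : Measurable W) :
    ∫⁻ x, ENNReal.ofReal (F x) * W x ∂μ = ∫⁻ t in Set.Ioi (0 : ℝ), ∫⁻ x in {x | t < F x}, W x ∂μ := by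
  have h1 := lintegral_eq_lintegral_meas_lt (μ.withDensity W) (.of_forall hF0) hF.aemeasurable
  rw [lintegral_withDensity_eq_lintegral_mul _ hW hF.ennreal_ofReal] at h1
  rw [show (fun x => ENNReal.ofReal (F x) * W x) = W * fun x => ENNReal.ofReal (F x) by
    ext x; simp [mul_comm], h1]
  refine lintegral_congr fun t => ?_
  rw [withDensity_apply _ (measurableSet_lt measurable_const hF)]

/-- The bound of `setLIntegral_exp_le` with additional symmetric quasi-concave factors, each of
which is a superposition of indicators of symmetric convex sets. -/
lemma setLIntegral_exp_prod_le {κ : Type*} {F : κ → (ι → ℝ) → ℝ} (hF : ∀ k, Measurable (F k))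
    (hF0 : ∀ k x, 0 ≤ F k x) (hFneg : ∀ k x, F k (-x) = F k x)
    (hFmid : ∀ k x y, min (F k x) (F k y) ≤ F k ((1 / 2 : ℝ) • (x + y)))
    {l : (ι → ℝ) →L[ℝ] ℝ} {b : (ι → ℝ) → ℝ} (hb : Measurable b) (hb0 : ∀ x, 0 ≤ b x)
    (hbneg : ∀ x, b (-x) = b x)
    (hbpar : ∀ x y, b x + b y = 2 * b ((1 / 2 : ℝ) • (x + y)) + 2 * b ((1 / 2 : ℝ) • (x - y)))
    {V : ℝ} (hV0 : 0 ≤ V) (hV : ∀ u, l u ^ 2 ≤ V * (∑ i, u i ^ 2 + 2 * b u)) (s : ℝ)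
    (S : Finset κ) {A : Set (ι → ℝ)} (hA : MeasurableSet A)
    (hAneg : ∀ x ∈ A, -x ∈ A) (hAmid : ∀ x ∈ A, ∀ y ∈ A, (1 / 2 : ℝ) • (x + y) ∈ A) :
    ∫⁻ x in A, (∏ k ∈ S, ENNReal.ofReal (F k x)) * ENNReal.ofReal (exp (s * l x - b x))
        ∂(stdGauss ι) ≤
      ENNReal.ofReal (exp (s ^ 2 * V / 2)) *
        ∫⁻ x in A, (∏ k ∈ S, ENNReal.ofReal (F k x)) * ENNReal.ofReal (exp (- b x))
          ∂(stdGauss ι) := by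
  classical
  have hl : Measurable l := l.continuous.measurable
  induction S using Finset.induction_on generalizing A with
  | empty =>
    simpa using setLIntegral_exp_le hA hAneg hAmid hb hb0 hbneg hbpar hV0 hV s
  | insert k S hk ih =>
    simp only [Finset.prod_insert hk, mul_assoc]
    have hP : Measurable fun x => ∏ k ∈ S, ENNReal.ofReal (F k x) :=
      Finset.measurable_fun_prod _ fun k _ => (hF k).ennreal_ofReal
    rw [lintegral_ofReal_mul_eq _ (hF k) (hF0 k)
        (W := fun x => (∏ k ∈ S, ENNReal.ofReal (F k x)) * ENNReal.ofReal (exp (s * l x - b x)))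
        (hP.mul (by fun_prop)),
      lintegral_ofReal_mul_eq _ (hF k) (hF0 k)
        (W := fun x => (∏ k ∈ S, ENNReal.ofReal (F k x)) * ENNReal.ofReal (exp (-b x)))
        (hP.mul (by fun_prop)),
      ← lintegral_const_mul' _ _ (by simp)]
    refine lintegral_mono fun t => ?_
    have hm : MeasurableSet {x | t < F k x} := measurableSet_lt measurable_const (hF k)
    simp only [Measure.restrict_restrict hm]
    apply ih (hm.inter hA)
    · rintro x ⟨h1, h2⟩
      refine ⟨?_, hAneg x h2⟩
      have h1' : t < F k x := h1
      show t < F k (-x)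
      rwa [hFneg]
    · rintro x ⟨h1, h2⟩ y ⟨h3, h4⟩
      exact ⟨lt_of_lt_of_le (lt_min h1 h3) (hFmid k x y), hAmid x h2 y h4⟩

lemma two_add_sq_le_exp_add_exp (y : ℝ) : 2 + y ^ 2 ≤ exp y + exp (-y) := by
  have h1 : |y / 2| ≤ |sinh (y / 2)| := by
    rw [abs_sinh]
    exact self_le_sinh_iff.mpr (abs_nonneg _)
  have h2 : (y / 2) ^ 2 ≤ sinh (y / 2) ^ 2 := sq_le_sq.mpr h1
  have h3 : cosh y = cosh (y / 2) ^ 2 + sinh (y / 2) ^ 2 := by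
    rw [← cosh_two_mul]; ring_nf
  have h4 := cosh_sq (y / 2)
  have h5 := cosh_eq y
  linarith

/-- Gaussian domination of variances: multiplying the Gaussian weight `exp (-|x|² / 2 - b x)` by
symmetric quasi-concave factors does not push the mean square of a linear functional above its
Gaussian value. -/
lemma integral_sq_mul_le {κ : Type*} (S : Finset κ) {F : κ → (ι → ℝ) → ℝ}
    (hF : ∀ k, Measurable (F k))
    (hF0 : ∀ k x, 0 ≤ F k x) (hF1 : ∀ k x, F k x ≤ 1) (hFneg : ∀ k x, F k (-x) = F k x)
    (hFmid : ∀ k x y, min (F k x) (F k y) ≤ F k ((1 / 2 : ℝ) • (x + y)))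
    {l : (ι → ℝ) →L[ℝ] ℝ} {b : (ι → ℝ) → ℝ} (hb : Measurable b) (hb0 : ∀ x, 0 ≤ b x)
    (hbneg : ∀ x, b (-x) = b x)
    (hbpar : ∀ x y, b x + b y = 2 * b ((1 / 2 : ℝ) • (x + y)) + 2 * b ((1 / 2 : ℝ) • (x - y)))
    {V : ℝ} (hV0 : 0 ≤ V) (hV : ∀ u, l u ^ 2 ≤ V * (∑ i, u i ^ 2 + 2 * b u)) :
    ∫ x, l x ^ 2 * ((∏ k ∈ S, F k x) * exp (- b x)) ∂(stdGauss ι) ≤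
      V * ∫ x, (∏ k ∈ S, F k x) * exp (- b x) ∂(stdGauss ι) := by
  have hl : Measurable l := l.continuous.measurable
  have hP0 : ∀ x, 0 ≤ ∏ k ∈ S, F k x := fun x => Finset.prod_nonneg fun k _ => hF0 k x
  have hPm : Measurable fun x => ∏ k ∈ S, F k x := Finset.measurable_fun_prod _ fun k _ => hF k
  set R : (ι → ℝ) → ℝ := fun x => (∏ k ∈ S, F k x) * exp (- b x) with hR
  have hR0 : ∀ x, 0 ≤ R x := fun x => mul_nonneg (hP0 x) (exp_pos _).le
  have hRm : Measurable R := hPm.mul (by fun_prop)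
  have hR1 : ∀ x, R x ≤ 1 := by
    intro x
    have h1 : ∏ k ∈ S, F k x ≤ 1 := Finset.prod_le_one (fun k _ => hF0 k x) fun k _ => hF1 k x
    have h2 : exp (-b x) ≤ 1 := exp_le_one_iff.mpr (by linarith [hb0 x])
    exact mul_le_one₀ h1 (exp_pos _).le h2
  have hexp : ∀ s : ℝ, ∫⁻ x, ENNReal.ofReal (exp (s * l x) * R x) ∂(stdGauss ι) ≤
      ENNReal.ofReal (exp (s ^ 2 * V / 2)) * ∫⁻ x, ENNReal.ofReal (R x) ∂(stdGauss ι) := by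
    intro s
    have h := setLIntegral_exp_prod_le hF hF0 hFneg hFmid hb hb0 hbneg hbpar hV0 hV s S
      MeasurableSet.univ (by simp) (by simp)
    simp only [Measure.restrict_univ] at h
    convert h using 3 with x x
    · rw [← ENNReal.ofReal_prod_of_nonneg fun k _ => hF0 k x, ← ENNReal.ofReal_mul (hP0 x), hR]
      congr 1
      rw [sub_eq_add_neg, exp_add]
      ring
    · ext x
      rw [← ENNReal.ofReal_prod_of_nonneg fun k _ => hF0 k x, ← ENNReal.ofReal_mul (hP0 x)]
  set Z := ∫⁻ x, ENNReal.ofReal (R x) ∂(stdGauss ι) with hZ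
  have hZt : Z ≠ ⊤ := by
    refine ne_top_of_le_ne_top (b := 1) (by simp) ?_
    calc Z ≤ ∫⁻ _, 1 ∂(stdGauss ι) :=
          lintegral_mono fun x => by simpa using ENNReal.ofReal_le_ofReal (hR1 x)
      _ = 1 := by simp
  set J := ∫⁻ x, ENNReal.ofReal (l x ^ 2 * R x) ∂(stdGauss ι) with hJ
  -- Apply the bound to `s` and `-s` and add, using `2 + y² ≤ exp y + exp (-y)` with `y = s l`.
  have hsum : ∀ s : ℝ, 2 * Z + ENNReal.ofReal (s ^ 2) * J ≤
      2 * (ENNReal.ofReal (exp (s ^ 2 * V / 2)) * Z) := by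
    intro s
    calc 2 * Z + ENNReal.ofReal (s ^ 2) * J
        = ∫⁻ x, ENNReal.ofReal ((2 + (s * l x) ^ 2) * R x) ∂(stdGauss ι) := by
          rw [hZ, hJ, ← lintegral_const_mul' _ _ (by simp), ← lintegral_const_mul' _ _ (by simp),
            ← lintegral_add_left' (by fun_prop)]
          congr 1 with x
          rw [← ENNReal.ofReal_mul (sq_nonneg s), add_mul,
            ENNReal.ofReal_add (by have := hR0 x; positivity) (by have := hR0 x; positivity),
            ENNReal.ofReal_mul (by norm_num : (0:ℝ) ≤ 2), ENNReal.ofReal_ofNat]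
          ring_nf
      _ ≤ ∫⁻ x, (ENNReal.ofReal (exp (s * l x) * R x) +
            ENNReal.ofReal (exp (-s * l x) * R x)) ∂(stdGauss ι) := by
          refine lintegral_mono fun x => ?_
          have := hR0 x
          rw [← ENNReal.ofReal_add (by positivity) (by positivity), ← add_mul, neg_mul]
          exact ENNReal.ofReal_le_ofReal
            (mul_le_mul_of_nonneg_right (two_add_sq_le_exp_add_exp _) this)
      _ ≤ _ := by
          rw [lintegral_add_left' (by fun_prop), two_mul]
          refine add_le_add (hexp s) ?_
          simpa using hexp (-s)
  have hJt : J ≠ ⊤ := by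
    have h1 := hsum 1
    intro h
    rw [h] at h1
    simp only [one_pow, ENNReal.ofReal_one, one_mul, add_top, top_le_iff] at h1
    exact ENNReal.mul_ne_top (by simp) (ENNReal.mul_ne_top (by simp) hZt) h1
  -- Take `s² = 2u`, expand the exponential to second order and divide by `u`.
  have hreal : ∀ u : ℝ, 0 < u → u * V ≤ 1 → J.toReal ≤ Z.toReal * (V + u * V ^ 2) := by
    intro u hu huV
    have h1 := hsum (√(2 * u))
    rw [sq_sqrt (by positivity)] at h1
    have h2 := ENNReal.toReal_mono
      (ENNReal.mul_ne_top (by simp) (ENNReal.mul_ne_top (by simp) hZt)) h1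
    rw [ENNReal.toReal_add (ENNReal.mul_ne_top (by simp) hZt) (ENNReal.mul_ne_top ENNReal.ofReal_ne_top hJt)]
      at h2
    simp only [ENNReal.toReal_mul, ENNReal.toReal_ofNat] at h2
    rw [ENNReal.toReal_ofReal (by positivity), ENNReal.toReal_ofReal (by positivity)] at h2
    have h3 : exp (2 * u * V / 2) ≤ 1 + u * V + (u * V) ^ 2 := by
      have huV0 : 0 ≤ u * V := by positivity
      have := Real.abs_exp_sub_one_sub_id_le (x := u * V) (by rwa [abs_of_nonneg huV0])
      rw [show 2 * u * V / 2 = u * V by ring]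
      linarith [(abs_le.mp this).2]
    have hz : 0 ≤ Z.toReal := ENNReal.toReal_nonneg
    have h4 := mul_le_mul_of_nonneg_right h3 hz
    have h5 : u * J.toReal ≤ u * (Z.toReal * (V + u * V ^ 2)) := by nlinarith
    exact le_of_mul_le_mul_left h5 hu
  have hlim : J.toReal ≤ Z.toReal * V := by
    have ht : Filter.Tendsto (fun u : ℝ => Z.toReal * (V + u * V ^ 2)) (nhdsWithin 0 (Set.Ioi 0))
        (nhds (Z.toReal * (V + 0 * V ^ 2))) := by
      apply Filter.Tendsto.mono_left _ nhdsWithin_le_nhds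
      apply Continuous.tendsto
      fun_prop
    have hev : ∀ᶠ u in nhdsWithin (0 : ℝ) (Set.Ioi 0), J.toReal ≤ Z.toReal * (V + u * V ^ 2) := by
      have h1 : ∀ᶠ u : ℝ in nhds 0, u * V < 1 := by
        have : Continuous fun u : ℝ => u * V := by fun_prop
        exact this.continuousAt.eventually_lt continuousAt_const (by simp)
      filter_upwards [nhdsWithin_le_nhds h1, self_mem_nhdsWithin] with u hu1 hu2
      exact hreal u hu2 hu1.le
    have := ge_of_tendsto ht hev
    simpa using this
  rw [integral_eq_lintegral_of_nonneg_ae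
      (.of_forall fun x => mul_nonneg (sq_nonneg _) (hR0 x)) (by fun_prop),
    integral_eq_lintegral_of_nonneg_ae (.of_forall hR0) (by fun_prop)]
  linarith

end Correlation

/-! ### A discrete Poincaré-type bound for the endpoint -/

section Discrete

lemma sq_sub_le_mul_sum_sq (x : ℕ → ℝ) {N M a b : ℕ} (hab : a ≤ b) (hbN : b ≤ N)
    (hbM : b ≤ a + M) :
    (x b - x a) ^ 2 ≤ M * ∑ k ∈ Finset.range N, (x (k + 1) - x k) ^ 2 := by
  rw [← Finset.sum_Ico_sub x hab]
  refine (sq_sum_le_card_mul_sum_sq).trans ?_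
  have h1 : ((Finset.Ico a b).card : ℝ) ≤ M := by
    rw [Nat.card_Ico]; exact_mod_cast (by omega : b - a ≤ M)
  refine mul_le_mul h1 ?_ (Finset.sum_nonneg fun _ _ => sq_nonneg _) (by positivity)
  refine Finset.sum_le_sum_of_subset_of_nonneg ?_ (fun _ _ _ => sq_nonneg _)
  intro k hk
  simp only [Finset.mem_Ico, Finset.mem_range] at hk ⊢
  omega

/-- The endpoint of a path started at `0` is controlled by its quadratic variation over blocks of
length `M` and by its total pairwise spread: go from the end to a time `N - 1 - k` with `k < M`,
from there to an arbitrary time `l`, from `l` to the time `k < M`, and from `k` to `0`, and average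
over `k` and `l`. -/
lemma sq_endpoint_le (x : ℕ → ℝ) (h0 : x 0 = 0) {N M : ℕ} (hM : 0 < M) (hMN : M ≤ N) :
    x N ^ 2 ≤ 8 * M * ∑ k ∈ Finset.range N, (x (k + 1) - x k) ^ 2 +
      8 / (M * N) * ∑ k ∈ Finset.range N, ∑ l ∈ Finset.range N, (x k - x l) ^ 2 := by
  set D := ∑ k ∈ Finset.range N, (x (k + 1) - x k) ^ 2 with hD
  set S := ∑ k ∈ Finset.range N, ∑ l ∈ Finset.range N, (x k - x l) ^ 2 with hS
  have hpt : ∀ k ∈ Finset.range M, ∀ l ∈ Finset.range N,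
      x N ^ 2 ≤ 8 * (M * D) + 4 * (x (N - 1 - k) - x l) ^ 2 + 4 * (x k - x l) ^ 2 := by
    intro k hk l hl
    rw [Finset.mem_range] at hk hl
    have h1 := sq_sub_le_mul_sum_sq x (N := N) (M := M) (a := N - 1 - k) (b := N)
      (by omega) le_rfl (by omega)
    have h2 := sq_sub_le_mul_sum_sq x (N := N) (M := M) (a := 0) (b := k)
      (by omega) (by omega) (by omega)
    rw [← hD] at h1 h2
    rw [h0] at h2
    have h3 : ∀ a b c e : ℝ, (a + b + c + e) ^ 2 ≤ 4 * (a ^ 2 + b ^ 2 + c ^ 2 + e ^ 2) := by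
      intro a b c e
      nlinarith [sq_nonneg (a - b), sq_nonneg (a - c), sq_nonneg (a - e), sq_nonneg (b - c),
        sq_nonneg (b - e), sq_nonneg (c - e)]
    have h4 := h3 (x N - x (N - 1 - k)) (x (N - 1 - k) - x l) (x l - x k) (x k - 0)
    have h5 : x N - x (N - 1 - k) + (x (N - 1 - k) - x l) + (x l - x k) + (x k - 0) = x N := by
      ring
    rw [h5] at h4
    nlinarith
  have hrow : ∀ T : ℕ → ℝ, (∀ k, 0 ≤ T k) →
      ∑ k ∈ Finset.range M, T k ≤ ∑ k ∈ Finset.range N, T k := fun T hT =>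
    Finset.sum_le_sum_of_subset_of_nonneg (Finset.range_mono hMN) fun _ _ _ => hT _
  have hr0 : ∀ k, 0 ≤ ∑ l ∈ Finset.range N, (x k - x l) ^ 2 := fun k =>
    Finset.sum_nonneg fun _ _ => sq_nonneg _
  have hsum : (M : ℝ) * (N * x N ^ 2) ≤ M * (N * (8 * (M * D))) + 4 * S + 4 * S := by
    calc (M : ℝ) * (N * x N ^ 2) = ∑ k ∈ Finset.range M, ∑ l ∈ Finset.range N, x N ^ 2 := by simp
      _ ≤ ∑ k ∈ Finset.range M, ∑ l ∈ Finset.range N,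
          (8 * (M * D) + 4 * (x (N - 1 - k) - x l) ^ 2 + 4 * (x k - x l) ^ 2) :=
          Finset.sum_le_sum fun k hk => Finset.sum_le_sum fun l hl => hpt k hk l hl
      _ = M * (N * (8 * (M * D))) +
          4 * ∑ k ∈ Finset.range M, ∑ l ∈ Finset.range N, (x (N - 1 - k) - x l) ^ 2 +
          4 * ∑ k ∈ Finset.range M, ∑ l ∈ Finset.range N, (x k - x l) ^ 2 := by
          simp only [Finset.sum_add_distrib, Finset.mul_sum]
          simp
      _ ≤ _ := by
          have h1 := hrow _ hr0
          have h2 := hrow (fun k => ∑ l ∈ Finset.range N, (x (N - 1 - k) - x l) ^ 2)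
            (fun k => hr0 _)
          rw [Finset.sum_range_reflect (fun k => ∑ l ∈ Finset.range N, (x k - x l) ^ 2) N] at h2
          linarith
  have hM0 : (0 : ℝ) < M := by exact_mod_cast hM
  have hN0 : (0 : ℝ) < N := by exact_mod_cast hM.trans_le hMN
  have hMN0 : (0 : ℝ) < M * N := by positivity
  have : x N ^ 2 ≤ (M * (N * (8 * (M * D))) + 4 * S + 4 * S) / (M * N) := by
    rw [le_div_iff₀ hMN0]; linarith
  refine this.trans_eq ?_
  field_simp
  ring

end Discrete

/-! ### Functions of the form radial quasi-convex plus quadratic -/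

section Radial

variable {d : ℕ}

/-- Quasi-convexity and radial symmetry force `f - ζ‖·‖²` to be nondecreasing in the radius: a
point `z` with `‖z‖ ≤ ‖w‖` lies on a segment between two antipodal points of norm `‖w‖`. -/
lemma radial_mono {f : EuclideanSpace ℝ (Fin d) → ℝ}
    (hfrad : ∀ z w : EuclideanSpace ℝ (Fin d), ‖z‖ = ‖w‖ → f z = f w) {ζ : ℝ}
    (hqc : ∀ c : ℝ, Convex ℝ {z : EuclideanSpace ℝ (Fin d) | f z - ζ * ‖z‖ ^ 2 ≤ c})
    {z w : EuclideanSpace ℝ (Fin d)} (hzw : ‖z‖ ≤ ‖w‖) :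
    f z - ζ * ‖z‖ ^ 2 ≤ f w - ζ * ‖w‖ ^ 2 := by
  obtain ⟨u, r, hu, hr0, hr1, rfl⟩ : ∃ (u : EuclideanSpace ℝ (Fin d)) (r : ℝ),
      ‖u‖ = ‖w‖ ∧ 0 ≤ r ∧ r ≤ 1 ∧ z = r • u := by
    by_cases hz : z = 0
    · exact ⟨w, 0, rfl, le_rfl, zero_le_one, by simp [hz]⟩
    · have hz' : 0 < ‖z‖ := norm_pos_iff.mpr hz
      have hw' : 0 < ‖w‖ := hz'.trans_le hzw
      refine ⟨(‖w‖ / ‖z‖) • z, ‖z‖ / ‖w‖, ?_, by positivity, (div_le_one hw').mpr hzw, ?_⟩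
      · rw [norm_smul, norm_div, norm_norm, norm_norm]; field_simp
      · rw [smul_smul]; field_simp; simp
  have hmem : ∀ v : EuclideanSpace ℝ (Fin d), ‖v‖ = ‖w‖ →
      v ∈ {z : EuclideanSpace ℝ (Fin d) | f z - ζ * ‖z‖ ^ 2 ≤ f w - ζ * ‖w‖ ^ 2} := by
    intro v hv
    change f v - ζ * ‖v‖ ^ 2 ≤ _
    rw [hfrad v w hv, hv]
  have := hqc _ (hmem u hu) (hmem (-u) (by rwa [norm_neg]))
    (show (0 : ℝ) ≤ (1 + r) / 2 by linarith) (show (0 : ℝ) ≤ (1 - r) / 2 by linarith) (by ring)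
  have h2 : ((1 + r) / 2) • u + ((1 - r) / 2) • (-u) = r • u := by
    rw [smul_neg, ← sub_eq_add_neg, ← sub_smul]; congr 1; ring
  rw [h2] at this
  exact this

lemma mul_norm_sq_le {f : EuclideanSpace ℝ (Fin d) → ℝ} (hf0 : ∀ z, 0 ≤ f z)
    (hfrad : ∀ z w : EuclideanSpace ℝ (Fin d), ‖z‖ = ‖w‖ → f z = f w) {ζ : ℝ}
    (hqc : ∀ c : ℝ, Convex ℝ {z : EuclideanSpace ℝ (Fin d) | f z - ζ * ‖z‖ ^ 2 ≤ c})
    (z : EuclideanSpace ℝ (Fin d)) : ζ * ‖z‖ ^ 2 ≤ f z := by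
  have h := radial_mono hfrad hqc (z := 0) (w := z) (by simp)
  have h0 := hf0 0
  simp only [norm_zero] at h
  linarith

end Radial

/-! ### Brownian increments are independent standard Gaussians -/

section Wiener

variable {d : ℕ}

/-- The coordinate functional `ω ↦ (ω s)ᵢ` on path space. -/
def coordL (s : ℝ) (i : Fin d) : PathSpace d →L[ℝ] ℝ :=
  (EuclideanSpace.proj i : EuclideanSpace ℝ (Fin d) →L[ℝ] ℝ) ∘L ContinuousMap.evalCLM ℝ s

@[simp] lemma coordL_apply (s : ℝ) (i : Fin d) (ω : PathSpace d) : coordL s i ω = ω s i := rfl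

/-- The normalised increment of the `i`-th coordinate over `[kδ, (k+1)δ]`. -/
def incrL (δ : ℝ) {N : ℕ} (q : Fin N × Fin d) : PathSpace d →L[ℝ] ℝ :=
  (√δ)⁻¹ • (coordL ((q.1 + 1) * δ) q.2 - coordL (q.1 * δ) q.2)

namespace IsWienerMeasure

variable {T : ℝ} {P : Measure (PathSpace d)}

lemma memLp_clm (hP : IsWienerMeasure T P) (L : PathSpace d →L[ℝ] ℝ) : MemLp L 2 P := by
  obtain ⟨v, hv⟩ := hP.2.1 L
  have h : MemLp id 2 (P.map L) := by
    rw [hv]; exact memLp_id_gaussianReal' 2 (by simp)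
  exact (memLp_map_measure_iff (by fun_prop) L.continuous.measurable.aemeasurable).mp h

lemma integral_clm (hP : IsWienerMeasure T P) (L : PathSpace d →L[ℝ] ℝ) : ∫ ω, L ω ∂P = 0 := by
  obtain ⟨v, hv⟩ := hP.2.1 L
  have h : ∫ x, x ∂(P.map L) = 0 := by rw [hv, integral_id_gaussianReal]
  rwa [integral_map L.continuous.measurable.aemeasurable (by fun_prop)] at h

/-- Linear functionals of a Wiener path that are orthonormal in `L²` are jointly standard
Gaussian. -/
lemma map_eq_stdGauss (hP : IsWienerMeasure T P) {ι : Type*} [Fintype ι] [DecidableEq ι]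
    (L : ι → PathSpace d →L[ℝ] ℝ)
    (hL : ∀ i j, ∫ ω, L i ω * L j ω ∂P = if i = j then 1 else 0) :
    P.map (fun ω i => L i ω) = stdGauss ι := by
  have := hP.1
  have hG : IsGaussian P := isGaussian_of_map_eq_gaussianReal fun L =>
    let ⟨v, hv⟩ := hP.2.1 L; ⟨0, v, hv⟩
  have hmeas : ∀ i, Measurable (L i) := fun i => (L i).continuous.measurable
  have hlaw : HasGaussianLaw (fun ω i => L i ω) P :=
    ⟨isGaussian_map_of_measurable (L := ContinuousLinearMap.pi L)
      (measurable_pi_lambda _ hmeas)⟩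
  have hind : iIndepFun (fun i => (L i : PathSpace d → ℝ)) P := by
    refine hlaw.iIndepFun_of_covariance_eq_zero fun i j hij => ?_
    rw [covariance_eq_sub (hP.memLp_clm _) (hP.memLp_clm _), hP.integral_clm]
    have := hL i j
    rw [if_neg hij] at this
    simpa using this
  rw [(iIndepFun_iff_map_fun_eq_pi_map fun i => (hmeas i).aemeasurable).mp hind]
  unfold stdGauss
  congr 1
  funext i
  obtain ⟨v, hv⟩ := hP.2.1 (L i)
  rw [hv]
  have h1 : Var[fun x => x; P.map (L i)] = 1 := by
    rw [variance_of_integral_eq_zero (by fun_prop)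
      (by rw [hv, integral_id_gaussianReal]),
      integral_map (hmeas i).aemeasurable (by fun_prop)]
    simpa [sq] using hL i i
  rw [hv, variance_fun_id_gaussianReal] at h1
  congr 1
  exact_mod_cast h1

/-- The paths start at the origin. -/
lemma ae_zero (hP : IsWienerMeasure T P) (hT : 0 ≤ T) (i : Fin d) : ∀ᵐ ω ∂P, ω 0 i = 0 := by
  have h := hP.2.2 0 0 ⟨le_rfl, hT⟩ ⟨le_rfl, hT⟩ i i
  have hint : Integrable (fun ω : PathSpace d => ω 0 i * ω 0 i) P :=
    (hP.memLp_clm (coordL 0 i)).integrable_mul (hP.memLp_clm (coordL 0 i))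
  simp only [min_self, if_true] at h
  rw [integral_eq_zero_iff_of_nonneg (fun ω => mul_self_nonneg _) hint] at h
  filter_upwards [h] with ω hω
  simpa using hω

lemma integral_incrL (hP : IsWienerMeasure T P) {N : ℕ} {δ : ℝ} (hδ : 0 < δ) (hN : N * δ = T)
    (q r : Fin N × Fin d) :
    ∫ ω, incrL δ q ω * incrL δ r ω ∂P = if q = r then 1 else 0 := by
  obtain ⟨k, i⟩ := q
  obtain ⟨l, j⟩ := r
  have hmem : ∀ a : ℕ, a ≤ N → (a * δ : ℝ) ∈ Set.Icc 0 T := fun a ha =>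
    ⟨by positivity, by rw [← hN]; gcongr⟩
  have hint : ∀ s t : ℝ, Integrable (fun ω : PathSpace d => ω s i * ω t j) P := fun s t =>
    (hP.memLp_clm (coordL s i)).integrable_mul (hP.memLp_clm (coordL t j))
  have hint2 : ∀ s t t' : ℝ, Integrable
      (fun ω : PathSpace d => ω s i * ω t j - ω s i * ω t' j) P := fun s t t' =>
    (hint s t).sub (hint s t')
  have hcov : ∀ a b : ℕ, a ≤ N → b ≤ N →
      ∫ ω, ω (a * δ) i * ω (b * δ) j ∂P = if i = j then δ * (min a b : ℕ) else 0 := by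
    intro a b ha hb
    rw [hP.2.2 _ _ (hmem a ha) (hmem b hb), ← min_mul_of_nonneg _ _ hδ.le, mul_comm]
    push_cast
    rfl
  have hexp : ∀ ω : PathSpace d, incrL δ (k, i) ω * incrL δ (l, j) ω = δ⁻¹ *
      (ω ((k + 1 : ℕ) * δ) i * ω ((l + 1 : ℕ) * δ) j - ω ((k + 1 : ℕ) * δ) i * ω ((l : ℕ) * δ) j -
        (ω ((k : ℕ) * δ) i * ω ((l + 1 : ℕ) * δ) j - ω ((k : ℕ) * δ) i * ω ((l : ℕ) * δ) j)) := by
    intro ω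
    have : (√δ)⁻¹ * (√δ)⁻¹ = δ⁻¹ := by rw [← mul_inv, mul_self_sqrt hδ.le]
    rw [← this]
    simp only [incrL, FunLike.coe_smul, FunLike.coe_sub, Pi.smul_apply,
      Pi.sub_apply, coordL_apply, smul_eq_mul]
    push_cast
    ring
  simp_rw [hexp]
  rw [integral_const_mul, integral_sub (hint2 _ _ _) (hint2 _ _ _),
    integral_sub (hint _ _) (hint _ _), integral_sub (hint _ _) (hint _ _),
    hcov _ _ (by omega) (by omega), hcov _ _ (by omega) (by omega),
    hcov _ _ (by omega) (by omega), hcov _ _ (by omega) (by omega)]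
  by_cases hij : i = j
  · subst hij
    simp only [if_true, Prod.mk.injEq, and_true]
    rcases lt_trichotomy (k : ℕ) l with h | h | h
    · rw [if_neg (by intro h'; rw [h'] at h; exact lt_irrefl _ h),
        min_eq_left (by omega), min_eq_left (by omega), min_eq_left (by omega),
        min_eq_left (by omega)]
      ring
    · rw [if_pos (Fin.ext h), h, min_self, min_self, min_eq_right (by omega),
        min_eq_left (by omega)]
      push_cast
      field_simp
      ring
    · rw [if_neg (by intro h'; rw [h'] at h; exact lt_irrefl _ h),
        min_eq_right (by omega), min_eq_right (by omega), min_eq_right (by omega),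
        min_eq_right (by omega)]
      ring
  · simp [hij]

lemma map_incrL (hP : IsWienerMeasure T P) {N : ℕ} {δ : ℝ} (hδ : 0 < δ) (hN : N * δ = T) :
    P.map (fun ω (q : Fin N × Fin d) => incrL δ q ω) = stdGauss (Fin N × Fin d) :=
  hP.map_eq_stdGauss _ (hP.integral_incrL hδ hN)

end IsWienerMeasure

end Wiener

/-! ### The bound for the discretised interaction -/

section Skeleton

variable {d : ℕ}

/-- Coordinate `i` at step `k` of the random walk with increments `√δ • x`. -/
def posL (δ : ℝ) {N : ℕ} (k : ℕ) (i : Fin d) : (Fin N × Fin d → ℝ) →L[ℝ] ℝ :=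
  √δ • ∑ j : Fin N, if (j : ℕ) < k then ContinuousLinearMap.proj (j, i) else 0

/-- Position at step `k` of the random walk with increments `√δ • x`. -/
def posV (δ : ℝ) {N : ℕ} (k : ℕ) : (Fin N × Fin d → ℝ) →L[ℝ] EuclideanSpace ℝ (Fin d) :=
  (EuclideanSpace.equiv (Fin d) ℝ).symm.toContinuousLinearMap ∘L
    ContinuousLinearMap.pi (posL δ k)

variable {N : ℕ} {δ : ℝ}

@[simp] lemma posV_apply (k : ℕ) (x : Fin N × Fin d → ℝ) (i : Fin d) :
    posV δ k x i = posL δ k i x := rfl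

lemma posL_apply (k : ℕ) (i : Fin d) (x : Fin N × Fin d → ℝ) :
    posL δ k i x = √δ * ∑ j : Fin N, if (j : ℕ) < k then x (j, i) else 0 := by
  simp only [posL, FunLike.coe_smul, Pi.smul_apply, smul_eq_mul,
    sum_apply]
  congr 1
  refine Finset.sum_congr rfl fun j _ => ?_
  split_ifs <;> simp

lemma posL_zero (i : Fin d) (x : Fin N × Fin d → ℝ) : posL δ 0 i x = 0 := by
  simp [posL_apply]

lemma posL_succ_sub (k : Fin N) (i : Fin d) (x : Fin N × Fin d → ℝ) :
    posL δ (k + 1) i x - posL δ k i x = √δ * x (k, i) := by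
  rw [posL_apply, posL_apply, ← mul_sub, ← Finset.sum_sub_distrib]
  congr 1
  rw [Finset.sum_eq_single k]
  · simp
  · intro j _ hj
    have hj' : (j : ℕ) ≠ k := fun h => hj (Fin.ext h)
    by_cases h : (j : ℕ) < k
    · simp [h, h.trans (Nat.lt_succ_self _)]
    · have : ¬ (j : ℕ) < k + 1 := by omega
      simp [h, this]
  · simp

lemma posL_incrL (hδ : 0 < δ) (ω : PathSpace d) (i : Fin d) {k : ℕ} (hk : k ≤ N) :
    posL (N := N) δ k i (fun q => incrL δ q ω) = ω (k * δ) i - ω 0 i := by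
  induction k with
  | zero => simp [posL_zero]
  | succ k ih =>
    have h := posL_succ_sub (δ := δ) (⟨k, hk⟩ : Fin N) i (fun q => incrL δ q ω)
    simp only at h
    rw [sub_eq_iff_eq_add, ih (by omega)] at h
    rw [h]
    have : √δ ≠ 0 := (sqrt_pos.mpr hδ).ne'
    simp only [incrL, FunLike.coe_smul, FunLike.coe_sub, Pi.smul_apply, Pi.sub_apply,
      coordL_apply, smul_eq_mul]
    push_cast
    rw [mul_inv_cancel_left₀ this]
    ring

lemma sq_coord_le_norm_sq (v : EuclideanSpace ℝ (Fin d)) (i : Fin d) : v i ^ 2 ≤ ‖v‖ ^ 2 := by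
  rw [EuclideanSpace.real_norm_sq_eq]
  exact Finset.single_le_sum (f := fun i => v i ^ 2) (fun _ _ => sq_nonneg _) (Finset.mem_univ i)

/-- The variance bound under the quadratic part of the energy. -/
lemma sq_posL_le (hδ : 0 < δ) {M : ℕ} (hM : 0 < M) (hMN : M ≤ N) {c : ℝ} (hc : 0 < c) (i : Fin d)
    (x : Fin N × Fin d → ℝ) :
    posL δ N i x ^ 2 ≤ (8 * (M * δ) + 4 / (M * N * c)) * (∑ q, x q ^ 2 +
      2 * (c * ∑ q : Fin N × Fin N, ‖posV (d := d) δ q.1 x - posV δ q.2 x‖ ^ 2)) := by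
  have hM0 : (0 : ℝ) < M := by exact_mod_cast hM
  have hN0 : (0 : ℝ) < N := by exact_mod_cast hM.trans_le hMN
  have h := sq_endpoint_le (fun k => posL δ k i x) (posL_zero i x) hM hMN
  have hD : ∑ k ∈ Finset.range N, (posL δ (k + 1) i x - posL δ k i x) ^ 2 ≤ δ * ∑ q, x q ^ 2 := by
    rw [Finset.sum_range, Fintype.sum_prod_type, Finset.mul_sum]
    refine Finset.sum_le_sum fun k _ => ?_
    rw [posL_succ_sub, mul_pow, sq_sqrt hδ.le]
    gcongr
    exact Finset.single_le_sum (f := fun i => x (k, i) ^ 2) (fun _ _ => sq_nonneg _)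
      (Finset.mem_univ i)
  have hS : ∑ k ∈ Finset.range N, ∑ l ∈ Finset.range N, (posL δ k i x - posL δ l i x) ^ 2 ≤
      ∑ q : Fin N × Fin N, ‖posV (d := d) δ q.1 x - posV δ q.2 x‖ ^ 2 := by
    rw [Finset.sum_range, Fintype.sum_prod_type]
    refine Finset.sum_le_sum fun k _ => ?_
    rw [Finset.sum_range]
    refine Finset.sum_le_sum fun l _ => ?_
    simpa using sq_coord_le_norm_sq (posV δ k x - posV δ l x) i
  set S := ∑ q : Fin N × Fin N, ‖posV (d := d) δ q.1 x - posV δ q.2 x‖ ^ 2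
  set U := ∑ q, x q ^ 2
  have hS0 : 0 ≤ S := Finset.sum_nonneg fun _ _ => sq_nonneg _
  have hU0 : 0 ≤ U := Finset.sum_nonneg fun _ _ => sq_nonneg _
  calc posL δ N i x ^ 2 ≤ 8 * M * (δ * U) + 8 / (M * N) * S := by
        refine h.trans (add_le_add ?_ ?_) <;> gcongr
    _ ≤ 8 * M * (δ * U) + 8 / (M * N) * S + (8 * (M * δ) * (2 * (c * S)) +
          4 / (M * N * c) * U) := le_add_of_nonneg_right (by positivity)
    _ = _ := by field_simp; ring

/-- The correlation inequality applied to a Gaussian random walk whose pair interactions are a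
fixed quadratic form plus radially nondecreasing functions. -/
lemma integral_sq_posL_le (hδ : 0 < δ) {M : ℕ} (hM : 0 < M) (hMN : M ≤ N) {c : ℝ} (hc : 0 < c)
    {G : Fin N × Fin N → EuclideanSpace ℝ (Fin d) → ℝ} (hGm : ∀ q, Measurable (G q))
    (hG0 : ∀ q z, c * ‖z‖ ^ 2 ≤ G q z)
    (hGr : ∀ q z w, ‖z‖ ≤ ‖w‖ → G q z - c * ‖z‖ ^ 2 ≤ G q w - c * ‖w‖ ^ 2) (i : Fin d) :
    ∫ x, posL δ N i x ^ 2 * exp (-∑ q, G q (posV δ q.1 x - posV δ q.2 x))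
        ∂(stdGauss (Fin N × Fin d)) ≤
      (8 * (M * δ) + 4 / (M * N * c)) *
        ∫ x, exp (-∑ q, G q (posV δ q.1 x - posV δ q.2 x)) ∂(stdGauss (Fin N × Fin d)) := by
  let D : Fin N × Fin N → (Fin N × Fin d → ℝ) →L[ℝ] EuclideanSpace ℝ (Fin d) :=
    fun q => posV δ q.1 - posV δ q.2
  have hDm : ∀ q, Measurable (D q) := fun q => (D q).continuous.measurable
  have hGneg : ∀ q z, G q (-z) = G q z := by
    intro q z
    have h1 := hGr q (-z) z (by rw [norm_neg])
    have h2 := hGr q z (-z) (by rw [norm_neg])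
    rw [norm_neg] at h1 h2
    linarith
  have key := integral_sq_mul_le (ι := Fin N × Fin d) (κ := Fin N × Fin N) Finset.univ
    (F := fun q x => exp (-(G q (D q x) - c * ‖D q x‖ ^ 2)))
    (l := posL δ N i) (b := fun x => c * ∑ q, ‖D q x‖ ^ 2)
    (V := 8 * (M * δ) + 4 / (M * N * c))
    (fun q => by have := hGm q; have := hDm q; fun_prop)
    (fun q x => (exp_pos _).le)
    (fun q x => exp_le_one_iff.mpr (by have := hG0 q (D q x); linarith))
    (fun q x => by simp only [map_neg, hGneg, norm_neg])
    (fun q x y => by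
      have hav : ‖D q ((1 / 2 : ℝ) • (x + y))‖ ≤ max ‖D q x‖ ‖D q y‖ := by
        rw [map_smul, map_add, norm_smul, Real.norm_of_nonneg (by norm_num : (0 : ℝ) ≤ 1 / 2)]
        have h1 := norm_add_le (D q x) (D q y)
        have h2 := le_max_left ‖D q x‖ ‖D q y‖
        have h3 := le_max_right ‖D q x‖ ‖D q y‖
        linarith
      rcases le_max_iff.mp hav with h | h
      · exact (min_le_left _ _).trans (exp_le_exp.mpr (neg_le_neg (hGr q _ _ h)))
      · exact (min_le_right _ _).trans (exp_le_exp.mpr (neg_le_neg (hGr q _ _ h))))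
    (by fun_prop)
    (fun x => by positivity)
    (fun x => by simp only [map_neg, norm_neg])
    (fun x y => by
      simp only [Finset.mul_sum]
      rw [← Finset.sum_add_distrib, ← Finset.sum_add_distrib]
      refine Finset.sum_congr rfl fun q _ => ?_
      have h := parallelogram_law_with_norm ℝ (D q x) (D q y)
      rw [map_smul, map_smul, map_add, map_sub, norm_smul, norm_smul,
        Real.norm_of_nonneg (by norm_num : (0 : ℝ) ≤ 1 / 2)]
      linear_combination (-(c / 2)) * h)
    (by positivity)
    (fun u => sq_posL_le hδ hM hMN hc i u)
  have hprod : ∀ x, (∏ q, exp (-(G q (D q x) - c * ‖D q x‖ ^ 2))) *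
      exp (-(c * ∑ q, ‖D q x‖ ^ 2)) = exp (-∑ q, G q (posV δ q.1 x - posV δ q.2 x)) := by
    intro x
    rw [← Real.exp_sum, ← Real.exp_add, Finset.mul_sum, ← Finset.sum_neg_distrib,
      ← Finset.sum_neg_distrib, ← Finset.sum_add_distrib]
    congr 1
    refine Finset.sum_congr rfl fun q _ => ?_
    change _ = -G q (D q x)
    ring
  simpa only [hprod] using key

/-- The same bound on path space, for the skeleton of a Wiener path at the times `kδ`. -/
lemma IsWienerMeasure.integral_sq_endpoint_le {T : ℝ} {P : Measure (PathSpace d)}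
    (hP : IsWienerMeasure T P) (hT : 0 ≤ T)
    (hδ : 0 < δ) (hN : N * δ = T) {M : ℕ} (hM : 0 < M) (hMN : M ≤ N) {c : ℝ} (hc : 0 < c)
    {G : Fin N × Fin N → EuclideanSpace ℝ (Fin d) → ℝ} (hGm : ∀ q, Measurable (G q))
    (hG0 : ∀ q z, c * ‖z‖ ^ 2 ≤ G q z)
    (hGr : ∀ q z w, ‖z‖ ≤ ‖w‖ → G q z - c * ‖z‖ ^ 2 ≤ G q w - c * ‖w‖ ^ 2) (i : Fin d) :
    ∫ ω, ω T i ^ 2 * exp (-∑ q, G q (ω (q.1 * δ) - ω (q.2 * δ))) ∂P ≤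
      (8 * (M * δ) + 4 / (M * N * c)) *
        ∫ ω, exp (-∑ q, G q (ω (q.1 * δ) - ω (q.2 * δ))) ∂P := by
  have h := integral_sq_posL_le hδ hM hMN hc hGm hG0 hGr i
  have hmeas : Measurable fun (ω : PathSpace d) (q : Fin N × Fin d) => incrL δ q ω :=
    measurable_pi_lambda _ fun q => (incrL δ q).continuous.measurable
  have hexpm : Measurable fun x : Fin N × Fin d → ℝ =>
      exp (-∑ q, G q (posV δ q.1 x - posV δ q.2 x)) := by
    have : ∀ q : Fin N × Fin N, Measurable fun x : Fin N × Fin d → ℝ =>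
        G q (posV δ q.1 x - posV δ q.2 x) := fun q => (hGm q).comp (by fun_prop)
    fun_prop
  have hlm : Measurable fun x : Fin N × Fin d → ℝ => posL δ N i x ^ 2 *
      exp (-∑ q, G q (posV δ q.1 x - posV δ q.2 x)) :=
    (by fun_prop : Measurable fun x : Fin N × Fin d → ℝ => posL δ N i x ^ 2).mul hexpm
  have hexp : ∀ ω : PathSpace d, exp (-∑ q : Fin N × Fin N, G q
      (posV δ q.1 (fun r : Fin N × Fin d => incrL δ r ω) -
        posV δ q.2 (fun r : Fin N × Fin d => incrL δ r ω))) =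
      exp (-∑ q, G q (ω (q.1 * δ) - ω (q.2 * δ))) := by
    intro ω
    congr 2
    refine Finset.sum_congr rfl fun q _ => ?_
    congr 1
    ext j
    simp [posL_incrL hδ ω j q.1.2.le, posL_incrL hδ ω j q.2.2.le]
  rw [← hP.map_incrL hδ hN, integral_map hmeas.aemeasurable hlm.aestronglyMeasurable,
    integral_map hmeas.aemeasurable hexpm.aestronglyMeasurable] at h
  simp only [hexp] at h
  refine le_trans (le_of_eq (integral_congr_ae ?_)) h
  filter_upwards [hP.ae_zero hT i] with ω hω
  rw [posL_incrL hδ ω i le_rfl, hN, hω, sub_zero]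

end Skeleton

/-! ### Riemann sums for the interaction energy -/

section Riemann

lemma abs_integral_sub_sum_le {ψ : ℝ → ℝ} (hψ : Continuous ψ) {δ ε : ℝ} (hδ : 0 ≤ δ) (N : ℕ)
    (c : ℕ → ℝ)
    (h : ∀ k < N, ∀ t ∈ Set.Icc (k * δ) ((k + 1 : ℕ) * δ), |ψ t - c k| ≤ ε) :
    |(∫ t in (0 : ℝ)..(N * δ), ψ t) - ∑ k ∈ Finset.range N, δ * c k| ≤ N * δ * ε := by
  have h1 := intervalIntegral.sum_integral_adjacent_intervals (μ := volume) (f := ψ)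
    (a := fun k : ℕ => (k : ℝ) * δ) (n := N) fun k _ => hψ.intervalIntegrable _ _
  simp only [Nat.cast_zero, zero_mul] at h1
  rw [← h1, ← Finset.sum_sub_distrib]
  refine (Finset.abs_sum_le_sum_abs _ _).trans ?_
  have h2 : ∀ k ∈ Finset.range N,
      |(∫ t in (k * δ)..((k + 1 : ℕ) * δ), ψ t) - δ * c k| ≤ δ * ε := by
    intro k hk
    have hle : (k : ℝ) * δ ≤ (k + 1 : ℕ) * δ := by push_cast; nlinarith
    have hlen : ((k + 1 : ℕ) : ℝ) * δ - k * δ = δ := by push_cast; ring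
    have h3 : (∫ t in (k * δ)..((k + 1 : ℕ) * δ), ψ t) - δ * c k =
        ∫ t in (k * δ)..((k + 1 : ℕ) * δ), (ψ t - c k) := by
      rw [intervalIntegral.integral_sub (hψ.intervalIntegrable _ _)
        (intervalIntegrable_const), intervalIntegral.integral_const, hlen, smul_eq_mul]
    have h4 := intervalIntegral.norm_integral_le_of_norm_le_const (C := ε)
      (f := fun t => ψ t - c k) (a := k * δ) (b := (k + 1 : ℕ) * δ) fun t ht => by
        rw [Set.uIoc_of_le hle] at ht
        exact h k (Finset.mem_range.mp hk) t ⟨ht.1.le, ht.2⟩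
    rw [h3, ← Real.norm_eq_abs]
    refine h4.trans_eq ?_
    rw [hlen, abs_of_nonneg hδ, mul_comm]
  refine (Finset.sum_le_sum h2).trans_eq ?_
  simp [mul_assoc]

/-- Left-endpoint Riemann sums on a square converge. -/
lemma tendsto_riemann_sum {φ : ℝ → ℝ → ℝ} (hφ : Continuous fun q : ℝ × ℝ => φ q.1 q.2) {T : ℝ}
    (hT : 0 < T) :
    Filter.Tendsto (fun N : ℕ => ∑ q : Fin N × Fin N,
        (T / N) ^ 2 * φ (q.1 * (T / N)) (q.2 * (T / N))) Filter.atTop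
      (nhds (∫ t in Set.Icc (0 : ℝ) T, ∫ s in Set.Icc (0 : ℝ) T, φ t s)) := by
  have hconv : ∫ t in Set.Icc (0 : ℝ) T, ∫ s in Set.Icc (0 : ℝ) T, φ t s =
      ∫ t in (0 : ℝ)..T, ∫ s in (0 : ℝ)..T, φ t s := by
    simp only [intervalIntegral.integral_of_le hT.le, integral_Icc_eq_integral_Ioc]
  rw [hconv, Metric.tendsto_atTop]
  intro ε hε
  set ε' := ε / (2 * T ^ 2) with hε'
  have hε'0 : 0 < ε' := by positivity
  have huc := (isCompact_Icc.prod isCompact_Icc :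
    IsCompact (Set.Icc (0 : ℝ) T ×ˢ Set.Icc (0 : ℝ) T)).uniformContinuousOn_of_continuous
      hφ.continuousOn
  rw [Metric.uniformContinuousOn_iff] at huc
  obtain ⟨η, hη, huc⟩ := huc ε' hε'0
  obtain ⟨N₀, hN₀⟩ := exists_nat_gt (T / η)
  refine ⟨N₀, fun N hN => ?_⟩
  have hNpos : (0 : ℝ) < N :=
    (by positivity : 0 < T / η).trans (hN₀.trans_le (by exact_mod_cast hN))
  set δ := T / N with hδdef
  have hδ : 0 < δ := by positivity
  have hδη : δ < η := by
    rw [hδdef, div_lt_iff₀ hNpos]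
    rw [div_lt_iff₀ hη] at hN₀
    have : (N₀ : ℝ) ≤ N := by exact_mod_cast hN
    nlinarith
  have hNδ : N * δ = T := by rw [hδdef]; field_simp
  have hin : ∀ k < N, ∀ t ∈ Set.Icc (k * δ) ((k + 1 : ℕ) * δ), t ∈ Set.Icc 0 T := by
    intro k hk t ht
    refine ⟨le_trans (by positivity) ht.1, ht.2.trans ?_⟩
    rw [← hNδ]
    have : ((k + 1 : ℕ) : ℝ) ≤ N := by exact_mod_cast hk
    gcongr
  have hleft : ∀ k : ℕ, (k * δ : ℝ) ∈ Set.Icc (k * δ) ((k + 1 : ℕ) * δ) := fun k =>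
    ⟨le_rfl, by push_cast; nlinarith⟩
  have hdist : ∀ k : ℕ, ∀ t ∈ Set.Icc (k * δ) ((k + 1 : ℕ) * δ), dist t (k * δ) < η := by
    intro k t ht
    rw [Real.dist_eq, abs_of_nonneg (by linarith [ht.1])]
    have := ht.2
    push_cast at this
    linarith
  have hpt : ∀ k < N, ∀ t ∈ Set.Icc (k * δ) ((k + 1 : ℕ) * δ), ∀ l < N,
      ∀ s ∈ Set.Icc (l * δ) ((l + 1 : ℕ) * δ), |φ t s - φ (k * δ) (l * δ)| ≤ ε' := by
    intro k hk t ht l hl s hs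
    refine (huc (t, s) ⟨hin k hk t ht, hin l hl s hs⟩ (k * δ, l * δ)
      ⟨hin k hk _ (hleft k), hin l hl _ (hleft l)⟩ ?_).le
    rw [Prod.dist_eq]
    exact max_lt (hdist k t ht) (hdist l s hs)
  have hinner : ∀ k < N, ∀ t ∈ Set.Icc (k * δ) ((k + 1 : ℕ) * δ),
      |(∫ s in (0 : ℝ)..T, φ t s) - ∑ l ∈ Finset.range N, δ * φ (k * δ) (l * δ)| ≤ T * ε' := by
    intro k hk t ht
    have := abs_integral_sub_sum_le (ψ := φ t) (by fun_prop) hδ.le N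
      (fun l => φ (k * δ) (l * δ)) (hpt k hk t ht)
    rwa [hNδ] at this
  have houter := abs_integral_sub_sum_le (ψ := fun t => ∫ s in (0 : ℝ)..T, φ t s)
    (intervalIntegral.continuous_parametric_intervalIntegral_of_continuous' (by exact hφ) 0 T)
    hδ.le N (fun k => ∑ l ∈ Finset.range N, δ * φ (k * δ) (l * δ)) hinner
  rw [hNδ] at houter
  have hsum : ∑ q : Fin N × Fin N, δ ^ 2 * φ (q.1 * δ) (q.2 * δ) =
      ∑ k ∈ Finset.range N, δ * ∑ l ∈ Finset.range N, δ * φ (k * δ) (l * δ) := by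
    rw [Fintype.sum_prod_type, Finset.sum_range]
    refine Finset.sum_congr rfl fun k _ => ?_
    rw [Finset.sum_range, Finset.mul_sum]
    refine Finset.sum_congr rfl fun l _ => ?_
    ring
  rw [hsum, dist_comm, Real.dist_eq]
  refine houter.trans_lt ?_
  rw [hε']
  have : T * (T * (ε / (2 * T ^ 2))) = ε / 2 := by field_simp
  linarith

variable {d : ℕ}

/-- The left-endpoint Riemann sum of `pairEnergy` with `N` subdivisions of `[0,T]`. -/
def discreteEnergy (f : EuclideanSpace ℝ (Fin d) → ℝ) (ξ T : ℝ) (N : ℕ) (ω : PathSpace d) : ℝ :=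
  ∑ q : Fin N × Fin N, (T / N) ^ 2 * (f (ω (q.1 * (T / N)) - ω (q.2 * (T / N))) /
    (1 + |q.1 * (T / N) - q.2 * (T / N)| ^ ξ))

lemma tendsto_discreteEnergy {f : EuclideanSpace ℝ (Fin d) → ℝ} (hfc : Continuous f) {ξ T : ℝ}
    (hξ : 0 ≤ ξ) (hT : 0 < T) (ω : PathSpace d) :
    Filter.Tendsto (fun N => discreteEnergy f ξ T N ω) Filter.atTop
      (nhds (pairEnergy f ξ T ω)) := by
  refine tendsto_riemann_sum (φ := fun t s => f (ω t - ω s) / (1 + |t - s| ^ ξ)) ?_ hT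
  refine Continuous.div (by fun_prop) ?_ fun q => by positivity
  exact continuous_const.add (Continuous.rpow_const (by fun_prop) fun _ => Or.inr hξ)

lemma continuous_discreteEnergy {f : EuclideanSpace ℝ (Fin d) → ℝ} (hfc : Continuous f) (ξ T : ℝ)
    (N : ℕ) : Continuous (discreteEnergy f ξ T N) := by
  unfold discreteEnergy
  fun_prop

lemma discreteEnergy_nonneg {f : EuclideanSpace ℝ (Fin d) → ℝ} (hf0 : ∀ z, 0 ≤ f z) (ξ T : ℝ)
    (N : ℕ) (ω : PathSpace d) : 0 ≤ discreteEnergy f ξ T N ω :=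
  Finset.sum_nonneg fun q _ => by
    have := hf0 (ω (q.1 * (T / N)) - ω (q.2 * (T / N)))
    positivity

end Riemann

/-! ### The variance bound for the tilted measure -/

section Tilted

variable {d : ℕ} {f : EuclideanSpace ℝ (Fin d) → ℝ} {ξ α ζ T : ℝ} {P : Measure (PathSpace d)}

/-- The bound for the discretised energy. Replacing `1 / (1 + |t - s| ^ ξ)` by its minimum
`1 / (1 + T ^ ξ)` in the quadratic part leaves a radially nondecreasing remainder. -/
lemma integral_sq_discreteEnergy_le (hP : IsWienerMeasure T P) (hT : 0 < T) (hξ : 0 ≤ ξ)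
    (hα : 0 < α) (hζ : 0 < ζ) (hfc : Continuous f) (hf0 : ∀ z, 0 ≤ f z)
    (hfrad : ∀ z w : EuclideanSpace ℝ (Fin d), ‖z‖ = ‖w‖ → f z = f w)
    (hqc : ∀ c : ℝ, Convex ℝ {z : EuclideanSpace ℝ (Fin d) | f z - ζ * ‖z‖ ^ 2 ≤ c})
    {p M : ℕ} (hp : 0 < p) (hM : 0 < M) (i : Fin d) :
    ∫ ω, ω T i ^ 2 * exp (-α * discreteEnergy f ξ T (p * M) ω) ∂P ≤
      (8 * (T / p) + 4 * p * (1 + T ^ ξ) / (α * ζ * T ^ 2)) *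
        ∫ ω, exp (-α * discreteEnergy f ξ T (p * M) ω) ∂P := by
  have hp0 : (0 : ℝ) < p := by exact_mod_cast hp
  have hM0 : (0 : ℝ) < M := by exact_mod_cast hM
  set N := p * M with hNdef
  have hNcast : (N : ℝ) = p * M := by rw [hNdef]; push_cast; ring
  have hN0 : (0 : ℝ) < N := by rw [hNcast]; positivity
  set δ := T / N with hδdef
  have hδ : 0 < δ := by positivity
  have hNδ : N * δ = T := by rw [hδdef]; field_simp
  have hw0 : 0 < 1 + T ^ ξ := by positivity
  set w : Fin N × Fin N → ℝ := fun q => 1 + |q.1 * δ - q.2 * δ| ^ ξ with hw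
  have hwpos : ∀ q, 0 < w q := fun q => by positivity
  have hwle : ∀ q, w q ≤ 1 + T ^ ξ := by
    intro q
    have hmem : ∀ k : Fin N, 0 ≤ (k : ℝ) * δ ∧ (k : ℝ) * δ ≤ T := fun k => by
      refine ⟨by positivity, ?_⟩
      rw [← hNδ]
      have : ((k : ℕ) : ℝ) ≤ N := by exact_mod_cast k.2.le
      gcongr
    have habs : |q.1 * δ - q.2 * δ| ≤ T := by
      rw [abs_le]
      constructor <;> linarith [(hmem q.1).1, (hmem q.1).2, (hmem q.2).1, (hmem q.2).2]
    exact add_le_add_right (rpow_le_rpow (abs_nonneg _) habs hξ) 1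
  set c := α * δ ^ 2 * ζ / (1 + T ^ ξ) with hc
  have hc0 : 0 < c := by positivity
  -- Split off the quadratic part: what remains is radially nondecreasing, hence quasi-convex.
  have hdecomp : ∀ q z, α * δ ^ 2 * (f z / w q) - c * ‖z‖ ^ 2 =
      α * δ ^ 2 * ((f z - ζ * ‖z‖ ^ 2) / w q) +
        α * δ ^ 2 * ζ * (1 / w q - 1 / (1 + T ^ ξ)) * ‖z‖ ^ 2 := by
    intro q z
    have := (hwpos q).ne'
    rw [hc]
    field_simp
    ring
  have hcoef : ∀ q, 0 ≤ α * δ ^ 2 * ζ * (1 / w q - 1 / (1 + T ^ ξ)) := by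
    intro q
    have := one_div_le_one_div_of_le (hwpos q) (hwle q)
    have h2 : 0 ≤ 1 / w q - 1 / (1 + T ^ ξ) := by linarith
    positivity
  have h := hP.integral_sq_endpoint_le hT.le hδ hNδ hM
    (by rw [hNdef]; exact Nat.le_mul_of_pos_left M hp) hc0
    (G := fun q z => α * δ ^ 2 * (f z / w q))
    (fun q => by fun_prop)
    (fun q z => by
      have h1 := hdecomp q z
      have h2 : 0 ≤ f z - ζ * ‖z‖ ^ 2 := sub_nonneg.mpr (mul_norm_sq_le hf0 hfrad hqc z)
      have h3 := hcoef q
      have h4 := hwpos q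
      have : 0 ≤ α * δ ^ 2 * (f z / w q) - c * ‖z‖ ^ 2 := by rw [h1]; positivity
      linarith)
    (fun q z z' hzz => by
      rw [hdecomp, hdecomp]
      have h1 := radial_mono hfrad hqc hzz
      have h3 := hcoef q
      have h4 := hwpos q
      gcongr) i
  have hE : ∀ ω : PathSpace d, -∑ q : Fin N × Fin N, α * δ ^ 2 *
      (f (ω (q.1 * δ) - ω (q.2 * δ)) / w q) = -α * discreteEnergy f ξ T N ω := by
    intro ω
    rw [discreteEnergy, neg_mul, Finset.mul_sum]
    congr 1
    refine Finset.sum_congr rfl fun q _ => ?_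
    rw [mul_assoc]
  simp only [hE] at h
  have hV : 8 * (M * δ) + 4 / (M * N * c) =
      8 * (T / p) + 4 * p * (1 + T ^ ξ) / (α * ζ * T ^ 2) := by
    rw [hc, hδdef, hNcast]
    field_simp
  rwa [hV] at h

lemma measurable_pairEnergy (hfc : Continuous f) (hξ : 0 ≤ ξ) (hT : 0 < T) :
    Measurable (pairEnergy (d := d) f ξ T) :=
  measurable_of_tendsto_metrizable
    (fun N => (continuous_discreteEnergy hfc ξ T N).measurable)
    (tendsto_pi_nhds.mpr fun ω => tendsto_discreteEnergy hfc hξ hT ω)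

lemma pairEnergy_nonneg (hf0 : ∀ z, 0 ≤ f z) (ω : PathSpace d) : 0 ≤ pairEnergy f ξ T ω :=
  integral_nonneg fun t => integral_nonneg fun s => by
    have := hf0 (ω t - ω s)
    positivity

/-- The bound for the continuous energy, as the limit of the discretised one. -/
lemma integral_sq_pairEnergy_le (hP : IsWienerMeasure T P) (hT : 0 < T) (hξ : 0 ≤ ξ)
    (hα : 0 < α) (hζ : 0 < ζ) (hfc : Continuous f) (hf0 : ∀ z, 0 ≤ f z)
    (hfrad : ∀ z w : EuclideanSpace ℝ (Fin d), ‖z‖ = ‖w‖ → f z = f w)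
    (hqc : ∀ c : ℝ, Convex ℝ {z : EuclideanSpace ℝ (Fin d) | f z - ζ * ‖z‖ ^ 2 ≤ c})
    {p : ℕ} (hp : 0 < p) (i : Fin d) :
    ∫ ω, ω T i ^ 2 * exp (-α * pairEnergy f ξ T ω) ∂P ≤
      (8 * (T / p) + 4 * p * (1 + T ^ ξ) / (α * ζ * T ^ 2)) *
        ∫ ω, exp (-α * pairEnergy f ξ T ω) ∂P := by
  have := hP.1
  have hsub : Filter.Tendsto (fun M : ℕ => p * (M + 1)) Filter.atTop Filter.atTop :=
    Filter.tendsto_atTop_mono (fun M => (Nat.le_succ M).trans (Nat.le_mul_of_pos_left _ hp))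
      Filter.tendsto_id
  have hle1 : ∀ N ω, exp (-α * discreteEnergy f ξ T N ω) ≤ 1 := fun N ω => by
    have := discreteEnergy_nonneg hf0 ξ T N ω
    exact exp_le_one_iff.mpr (by nlinarith)
  have hcont : ∀ N, Continuous fun ω : PathSpace d => exp (-α * discreteEnergy f ξ T N ω) :=
    fun N => by have := continuous_discreteEnergy hfc ξ T N; fun_prop
  have hcoord : Continuous fun ω : PathSpace d => ω T i := (coordL T i).continuous
  have hsq : Integrable (fun ω : PathSpace d => ω T i ^ 2) P :=
    (hP.memLp_clm (coordL T i)).integrable_sq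
  have hlim : ∀ ω, Filter.Tendsto (fun M : ℕ => exp (-α * discreteEnergy f ξ T (p * (M + 1)) ω))
      Filter.atTop (nhds (exp (-α * pairEnergy f ξ T ω))) := fun ω =>
    (((tendsto_discreteEnergy hfc hξ hT ω).comp hsub).const_mul (-α)).rexp
  have h1 : Filter.Tendsto (fun M : ℕ =>
      ∫ ω, ω T i ^ 2 * exp (-α * discreteEnergy f ξ T (p * (M + 1)) ω) ∂P) Filter.atTop
      (nhds (∫ ω, ω T i ^ 2 * exp (-α * pairEnergy f ξ T ω) ∂P)) := by
    refine tendsto_integral_of_dominated_convergence (fun ω => ω T i ^ 2)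
      (fun M => ((hcoord.pow 2).mul (hcont _)).aestronglyMeasurable) hsq
      (fun M => .of_forall fun ω => ?_) (.of_forall fun ω => (hlim ω).const_mul _)
    rw [Real.norm_of_nonneg (by positivity)]
    exact mul_le_of_le_one_right (sq_nonneg _) (hle1 _ ω)
  have h2 : Filter.Tendsto (fun M : ℕ =>
      ∫ ω, exp (-α * discreteEnergy f ξ T (p * (M + 1)) ω) ∂P) Filter.atTop
      (nhds (∫ ω, exp (-α * pairEnergy f ξ T ω) ∂P)) := by
    refine tendsto_integral_of_dominated_convergence (fun _ => 1)
      (fun M => (hcont _).aestronglyMeasurable) (integrable_const _)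
      (fun M => .of_forall fun ω => ?_) (.of_forall hlim)
    rw [Real.norm_of_nonneg (by positivity)]
    exact hle1 _ ω
  exact le_of_tendsto_of_tendsto' h1 (h2.const_mul _) fun M =>
    integral_sq_discreteEnergy_le hP hT hξ hα hζ hfc hf0 hfrad hqc hp M.succ_pos i

/-- The mean square displacement bound at a fixed time horizon, with a free parameter `p`. -/
lemma integral_tiltedPath_le (hP : IsWienerMeasure T P) (hT : 0 < T) (hξ : 0 ≤ ξ)
    (hα : 0 < α) (hζ : 0 < ζ) (hfc : Continuous f) (hf0 : ∀ z, 0 ≤ f z)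
    (hfrad : ∀ z w : EuclideanSpace ℝ (Fin d), ‖z‖ = ‖w‖ → f z = f w)
    (hqc : ∀ c : ℝ, Convex ℝ {z : EuclideanSpace ℝ (Fin d) | f z - ζ * ‖z‖ ^ 2 ≤ c})
    {p : ℕ} (hp : 0 < p) :
    ∫ ω, ‖ω T‖ ^ 2 ∂(tiltedPath P f α ξ T) ≤
      d * (8 * (T / p) + 4 * p * (1 + T ^ ξ) / (α * ζ * T ^ 2)) := by
  have := hP.1
  have hle1 : ∀ ω, exp (-α * pairEnergy f ξ T ω) ≤ 1 := fun ω => by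
    have := pairEnergy_nonneg (ξ := ξ) (T := T) hf0 ω
    exact exp_le_one_iff.mpr (by nlinarith)
  have hmeas : Measurable fun ω : PathSpace d => exp (-α * pairEnergy f ξ T ω) := by
    have := measurable_pairEnergy (d := d) hfc hξ hT
    fun_prop
  have hint : Integrable (fun ω => exp (-α * pairEnergy f ξ T ω)) P :=
    (integrable_const (1 : ℝ)).mono' hmeas.aestronglyMeasurable (.of_forall fun ω => by
      rw [Real.norm_of_nonneg (by positivity)]; exact hle1 ω)
  have hinti : ∀ i : Fin d,
      Integrable (fun ω : PathSpace d => ω T i ^ 2 * exp (-α * pairEnergy f ξ T ω)) P := fun i =>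
    (hP.memLp_clm (coordL T i)).integrable_sq.mul_bdd (c := 1) hmeas.aestronglyMeasurable
      (.of_forall fun ω => by rw [Real.norm_of_nonneg (by positivity)]; exact hle1 ω)
  have hZ : 0 < ∫ ω, exp (-α * pairEnergy f ξ T ω) ∂P := integral_exp_pos hint
  rw [tiltedPath, integral_tilted]
  have heq : ∀ ω : PathSpace d,
      (exp (-α * pairEnergy f ξ T ω) / ∫ ω, exp (-α * pairEnergy f ξ T ω) ∂P) • ‖ω T‖ ^ 2 =
      (∑ i, ω T i ^ 2 * exp (-α * pairEnergy f ξ T ω)) /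
        ∫ ω, exp (-α * pairEnergy f ξ T ω) ∂P := by
    intro ω
    rw [EuclideanSpace.real_norm_sq_eq, ← Finset.sum_mul, smul_eq_mul]
    ring
  simp_rw [heq]
  rw [integral_div, div_le_iff₀ hZ, integral_finsetSum _ fun i _ => hinti i]
  refine (Finset.sum_le_sum fun i _ =>
    integral_sq_pairEnergy_le hP hT hξ hα hζ hfc hf0 hfrad hqc hp i).trans_eq ?_
  simp [mul_assoc]

end Tilted

/-! ### Choice of the block number -/

/-- With `p ≈ T ^ ((3 - ξ) / 2)` both terms of the variance bound are of order
`T ^ (-(1 - ξ) / 2)`. -/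
lemma exists_block_number {ξ T C : ℝ} (hξ : 0 ≤ ξ) (hξ1 : ξ ≤ 1) (hT : 1 ≤ T) (hC : 0 < C) :
    ∃ p : ℕ, 0 < p ∧ 8 * (T / p) + 4 * p * (1 + T ^ ξ) / (C * T ^ 2) ≤
      (8 + 16 / C) * T ^ (-((1 - ξ) / 2)) := by
  have hT0 : 0 < T := by linarith
  set Q := T ^ ((3 - ξ) / 2) with hQ
  set a := T ^ (-((1 - ξ) / 2)) with ha
  have hQ1 : 1 ≤ Q := one_le_rpow hT (by linarith)
  have ha0 : 0 < a := by positivity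
  have hTa : T = a * Q := by
    rw [hQ, ha, ← rpow_add hT0]
    conv_lhs => rw [← rpow_one T]
    congr 1; ring
  have hTQ : Q * T ^ ξ = a * T ^ 2 := by
    rw [hQ, ha, ← rpow_natCast T 2, ← rpow_add hT0, ← rpow_add hT0]
    congr 1; push_cast; ring
  have hTξ : 1 ≤ T ^ ξ := one_le_rpow hT hξ
  refine ⟨⌈Q⌉₊, Nat.ceil_pos.mpr (by linarith), ?_⟩
  have hp1 : Q ≤ (⌈Q⌉₊ : ℝ) := Nat.le_ceil Q
  have hp2 : (⌈Q⌉₊ : ℝ) ≤ 2 * Q := by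
    have := Nat.ceil_lt_add_one (zero_le_one.trans hQ1)
    linarith
  set p : ℝ := (⌈Q⌉₊ : ℝ)
  have hp0 : 0 < p := by linarith
  have h1 : T / p ≤ a := by
    rw [div_le_iff₀ hp0]
    conv_lhs => rw [hTa]
    gcongr
  have h2 : 4 * p * (1 + T ^ ξ) / (C * T ^ 2) ≤ 16 / C * a := by
    rw [div_le_iff₀ (by positivity)]
    calc 4 * p * (1 + T ^ ξ) ≤ 4 * (2 * Q) * (T ^ ξ + T ^ ξ) := by gcongr
      _ = 16 * (Q * T ^ ξ) := by ring
      _ = 16 / C * a * (C * T ^ 2) := by rw [hTQ]; field_simp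
  linarith

/-- Theorem 1.1, second part: for `ξ ∈ (0,1)` the mean square
displacement under the tilted measure tends to `0` as `T = 2^t → ∞`. -/
theorem statement1 (d : ℕ) (hd : 1 ≤ d) (ξ : ℝ) (hξ0 : 0 < ξ) (hξ1 : ξ < 1)
    (α : ℝ) (hα : 0 < α)
    (f : EuclideanSpace ℝ (Fin d) → ℝ)
    (hfc : Continuous f) (hf0 : ∀ z, 0 ≤ f z)
    (hfrad : ∀ z w : EuclideanSpace ℝ (Fin d), ‖z‖ = ‖w‖ → f z = f w)
    (ζ : ℝ) (hζ : 0 < ζ)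
    (hqc : ∀ c : ℝ, Convex ℝ {z : EuclideanSpace ℝ (Fin d) | f z - ζ * ‖z‖ ^ 2 ≤ c})
    (P : ℕ → Measure (PathSpace d))
    (hP : ∀ t : ℕ, IsWienerMeasure ((2:ℝ) ^ t) (P t)) :
    Filter.Tendsto
      (fun t : ℕ => ∫ ω, ‖ω ((2:ℝ) ^ t)‖ ^ 2 ∂(tiltedPath (P t) f α ξ ((2:ℝ) ^ t)))
      Filter.atTop (nhds 0) := by
  set C := α * ζ with hC
  have hC0 : 0 < C := mul_pos hα hζ
  have hlim : Filter.Tendsto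
      (fun t : ℕ => d * ((8 + 16 / C) * ((2 : ℝ) ^ t) ^ (-((1 - ξ) / 2)))) Filter.atTop
      (nhds (d * ((8 + 16 / C) * 0))) :=
    (((tendsto_rpow_neg_atTop (by linarith)).comp
      (tendsto_pow_atTop_atTop_of_one_lt one_lt_two)).const_mul _).const_mul _
  rw [mul_zero, mul_zero] at hlim
  refine squeeze_zero (fun t => integral_nonneg fun ω => by positivity) (fun t => ?_) hlim
  obtain ⟨p, hp, hle⟩ := exists_block_number (T := (2 : ℝ) ^ t) hξ0.le hξ1.le
    (one_le_pow₀ one_le_two) hC0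
  refine (integral_tiltedPath_le (hP t) (by positivity) hξ0.le hα hζ hfc hf0 hfrad hqc hp).trans ?_
  gcongr
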